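/- Fix T > 0, t ∈ [0,T), s > 0. With κ, γ, η and the payoff data as defined, let ξ(λ) := ∫_ℝ s^{z_y−1}·γ(λ,z_y)·e^{η(λ,z_y)(T−t)}·p(z_y) dy for λ ∈ [0,1]. Then λ ↦ ξ(λ) is twice continuously differentiable on [0,1], and with m := (μ+½σ²)/σ², s₃ := (∫x³K(dx))/σ³, s₄ := (∫x⁴K(dx))/σ⁴ and D_k the Black–Scholes cash greeks: ξ(0) = D₁(t,s)/s; ξ'(0) = s₃·σ·(1/s)·(a₂D₂(t,s) + σ²(T−t)·Σ_{k=2}^{4} b_k D_k(t,s)) with a₂ = ½, b₂ = 1 − m, b₃ = 1 − ½m, b₄ = 1/6; and ξ''(0) = s₃²·σ²·(1/s)·(c₂D₂(t,s) + σ²(T−t)·Σ_{k=2}^{5} d_k D_k(t,s)) + s₃²·σ⁶·(T−t)²·(1/s)·Σ_{k=2}^{7} e_k D_k(t,s) + s₄·σ²·(1/s)·(Σ_{k=2}^{3} f_k D_k(t,s) + σ²(T−t)·Σ_{k=2}^{5} g_k D_k(t,s)), where c₂ = −1, d₂ = 2/3 + m, d₃ = 17/6 − m, d₄ = 3/2 −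 ½m, d₅ = 1/6, e₂ = 1 − 2m + m², e₃ = 7 − 10m + (7/2)m², e₄ = 55/6 − 9m + 2m², e₅ = 23/6 − (7/3)m + ¼m², e₆ = 7/12 − (1/6)m, e₇ = 1/36, f₂ = 3/2, f₃ = 1/3, g₂ = 7/6 − 3m, g₃ = 25/12 − (5/2)m, g₄ = 5/6 − ⅓m, g₅ = 1/12. -/

import Mathlib

open MeasureTheory Complex Set

/-- Cumulant generating function `κ(λ, z)` of the interpolating family. -/
noncomputable def kappa (μ c : ℝ) (K : Measure ℝ) (lam : ℝ) (z : ℂ) : ℂ :=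
  if lam = 0 then (μ : ℂ) * z + (((c + ∫ x : ℝ, x ^ 2 ∂K) : ℝ) : ℂ) / 2 * z ^ 2
  else (μ : ℂ) * z + (c : ℂ) / 2 * z ^ 2 +
    ((lam : ℂ) ^ 2)⁻¹ *
      ∫ x : ℝ, (Complex.exp ((lam : ℂ) * z * (x : ℂ)) - 1 - (lam : ℂ) * z * (x : ℂ)) ∂K

noncomputable def kbar (μ c : ℝ) (K : Measure ℝ) (lam : ℝ) (y z : ℂ) : ℂ :=
  kappa μ c K lam (y + z) - kappa μ c K lam y - kappa μ c K lam z

noncomputable def gamLK (μ c : ℝ) (K : Measure ℝ) (lam : ℝ) (z : ℂ) : ℂ :=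
  kbar μ c K lam z 1 / kbar μ c K lam 1 1

noncomputable def etaLK (μ c : ℝ) (K : Measure ℝ) (lam : ℝ) (z : ℂ) : ℂ :=
  kappa μ c K lam z - kappa μ c K lam 1 * gamLK μ c K lam z

noncomputable def cpowR (s : ℝ) (z : ℂ) : ℂ := Complex.exp (z * Real.log s)

noncomputable def zLine (R y : ℝ) : ℂ := (R : ℂ) + (y : ℂ) * Complex.I

/-- Fourier transform `l̂(y) = ∫ l(x) e^{-ixy} dx`. -/
noncomputable def lhat (l : ℝ → ℝ) (y : ℝ) : ℂ :=
  ∫ x : ℝ, (l x : ℂ) * Complex.exp (-(Complex.I * (x : ℂ) * (y : ℂ)))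

noncomputable def pCoef (l : ℝ → ℝ) (y : ℝ) : ℂ := lhat l y / (2 * (Real.pi : ℂ))

/-- Black-Scholes cash greek `D_n(t,s)` in integral form (with `C = D_0`). -/
noncomputable def cashGreek (σ2 T R : ℝ) (l : ℝ → ℝ) (n : ℕ) (t s : ℝ) : ℂ :=
  ∫ y : ℝ, (∏ k ∈ Finset.range n, (zLine R y - (k : ℂ))) * cpowR s (zLine R y) *
    Complex.exp (((σ2 : ℂ) / 2) * zLine R y * (zLine R y - 1) * ((T : ℂ) - (t : ℂ))) * pCoef l y


noncomputable def phiK (k : ℕ) (w : ℂ) : ℂ :=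
  ∫ θ in (0:ℝ)..1, (((1 - θ) * θ ^ k : ℝ) : ℂ) * Complex.exp ((θ : ℂ) * w)

lemma exp_theta_le (θ r : ℝ) (h0 : 0 ≤ θ) (h1 : θ ≤ 1) : Real.exp (θ * r) ≤ 1 + Real.exp r := by
  rcases le_total 0 r with h | h
  · have : Real.exp (θ * r) ≤ Real.exp r := Real.exp_le_exp.2 (by nlinarith)
    linarith
  · have : Real.exp (θ * r) ≤ Real.exp 0 := Real.exp_le_exp.2 (by nlinarith)
    have h2 := Real.exp_pos r
    rw [Real.exp_zero] at this
    linarith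

lemma phi_weight_le (k : ℕ) (θ : ℝ) (h0 : 0 ≤ θ) (h1 : θ ≤ 1) : ‖(((1 - θ) * θ ^ k : ℝ) : ℂ)‖ ≤ 1 := by
  rw [Complex.norm_real, Real.norm_eq_abs, abs_of_nonneg (mul_nonneg (by linarith) (by positivity))]
  have : θ ^ k ≤ 1 := pow_le_one₀ h0 h1
  have : 0 ≤ θ ^ k := by positivity
  nlinarith

lemma phi_integrand_le (k : ℕ) (θ : ℝ) (w : ℂ) (h0 : 0 ≤ θ) (h1 : θ ≤ 1) :
    ‖(((1 - θ) * θ ^ k : ℝ) : ℂ) * Complex.exp ((θ : ℂ) * w)‖ ≤ 1 + Real.exp w.re := by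
  rw [norm_mul, Complex.norm_exp]
  have h2 := exp_theta_le θ w.re h0 h1
  have h3 := phi_weight_le k θ h0 h1
  have h4 : ((θ : ℂ) * w).re = θ * w.re := by simp
  rw [h4]
  calc _ ≤ 1 * Real.exp (θ * w.re) := by gcongr
    _ ≤ _ := by linarith

lemma norm_phiK_le (k : ℕ) (w : ℂ) : ‖phiK k w‖ ≤ 1 + Real.exp w.re := by
  have := intervalIntegral.norm_integral_le_of_norm_le_const (a := (0:ℝ)) (b := 1)
    (C := 1 + Real.exp w.re)
    (f := fun θ : ℝ => (((1 - θ) * θ ^ k : ℝ) : ℂ) * Complex.exp ((θ : ℂ) * w)) (by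
      intro θ hθ
      rw [Set.uIoc_of_le zero_le_one] at hθ
      exact phi_integrand_le k θ w hθ.1.le hθ.2)
  simpa [phiK] using this

lemma phiK_hasDerivAt (k : ℕ) (w : ℂ) : HasDerivAt (phiK k) (phiK (k+1) w) w := by
  have := intervalIntegral.hasDerivAt_integral_of_dominated_loc_of_deriv_le
    (μ := volume) (a := (0:ℝ)) (b := 1) (x₀ := w) (s := Metric.ball w 1)
    (F := fun (w:ℂ) (θ:ℝ) => (((1 - θ) * θ ^ k : ℝ) : ℂ) * Complex.exp ((θ : ℂ) * w))
    (F' := fun (w:ℂ) (θ:ℝ) => (((1 - θ) * θ ^ (k+1) : ℝ) : ℂ) * Complex.exp ((θ : ℂ) * w))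
    (bound := fun _ => 1 + Real.exp (w.re + 1))
    (Metric.ball_mem_nhds w one_pos)
    (Filter.Eventually.of_forall fun z => by
      apply Continuous.aestronglyMeasurable; fun_prop)
    (by apply Continuous.intervalIntegrable; fun_prop)
    (by apply Continuous.aestronglyMeasurable; fun_prop)
    (by
      refine Filter.Eventually.of_forall fun θ hθ z hz => ?_
      rw [Set.uIoc_of_le zero_le_one] at hθ
      refine (phi_integrand_le (k+1) θ z hθ.1.le hθ.2).trans ?_
      have h1 : |(z - w).re| ≤ ‖z - w‖ := Complex.abs_re_le_norm _
      have h2 : ‖z - w‖ < 1 := by simpa [dist_eq_norm] using hz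
      have h3 := (abs_le.1 (h1.trans h2.le)).2
      simp at h3
      gcongr
      linarith)
    (by simp)
    (by
      refine Filter.Eventually.of_forall fun θ hθ z hz => ?_
      have h1 : HasDerivAt (fun z : ℂ => (θ:ℂ) * z) (θ:ℂ) z := by
        simpa using (hasDerivAt_id z).const_mul (θ:ℂ)
      have := (h1.cexp).const_mul ((((1 - θ) * θ ^ k : ℝ) : ℂ))
      refine this.congr_deriv ?_
      push_cast
      ring)
  exact this.2

lemma continuous_phiK (k : ℕ) : Continuous (phiK k) :=
  continuous_iff_continuousAt.2 fun w => (phiK_hasDerivAt k w).continuousAt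

lemma phiK_zero_identity (w : ℂ) : w ^ 2 * phiK 0 w = Complex.exp w - 1 - w := by
  unfold phiK
  rw [← intervalIntegral.integral_const_mul]
  have h : ∀ θ ∈ Set.uIcc (0:ℝ) 1, HasDerivAt
      (fun θ : ℝ => (1 - (θ:ℂ)) * w * Complex.exp ((θ:ℂ) * w) + Complex.exp ((θ:ℂ) * w))
      (w ^ 2 * ((((1 - θ) * θ ^ 0 : ℝ) : ℂ) * Complex.exp ((θ : ℂ) * w))) θ := by
    intro θ _
    have h0 : HasDerivAt (fun θ : ℝ => (θ:ℂ)) 1 θ := Complex.ofRealCLM.hasDerivAt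
    have h1 : HasDerivAt (fun θ : ℝ => (θ:ℂ) * w) w θ := by
      simpa using h0.mul_const w
    have h2 := h1.cexp
    have h3 := (((h0.const_sub 1).mul_const w).mul h2).add h2
    refine h3.congr_deriv ?_
    push_cast
    ring
  rw [intervalIntegral.integral_eq_sub_of_hasDerivAt h (by
    apply Continuous.intervalIntegrable; fun_prop)]
  simp
  ring

lemma phiK_at_zero (k : ℕ) : phiK k 0 = 1 / (((k:ℂ) + 1) * ((k:ℂ) + 2)) := by
  have h : phiK k 0 = ((∫ θ in (0:ℝ)..1, (1 - θ) * θ ^ k : ℝ) : ℂ) := by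
    unfold phiK
    rw [← intervalIntegral.integral_ofReal]
    simp
  have h2 : (∫ θ in (0:ℝ)..1, (1 - θ) * θ ^ k : ℝ) = 1 / (((k:ℝ) + 1) * ((k:ℝ) + 2)) := by
    have : ∀ θ : ℝ, (1 - θ) * θ ^ k = θ ^ k - θ ^ (k+1) := by intro θ; ring
    simp_rw [this]
    rw [intervalIntegral.integral_sub (by apply Continuous.intervalIntegrable; fun_prop)
      (by apply Continuous.intervalIntegrable; fun_prop), integral_pow, integral_pow]
    simp
    have : (k:ℝ) + 1 ≠ 0 := by positivity
    have : (k:ℝ) + 2 ≠ 0 := by positivity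
    have : (k:ℝ) + 1 + 1 ≠ 0 := by positivity
    field_simp
    ring
  rw [h, h2]
  push_cast
  rfl

noncomputable def wE (a1 b1 x : ℝ) : ℝ := 1 + Real.exp (a1 * x) + Real.exp (b1 * x)

lemma exp_le_wE (a1 b1 r x : ℝ) (h1 : a1 ≤ r) (h2 : r ≤ b1) :
    Real.exp (r * x) ≤ wE a1 b1 x := by
  unfold wE
  have := Real.exp_pos (a1 * x)
  have := Real.exp_pos (b1 * x)
  rcases le_total 0 x with h | h
  · have : Real.exp (r * x) ≤ Real.exp (b1 * x) := Real.exp_le_exp.2 (by nlinarith)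
    linarith
  · have : Real.exp (r * x) ≤ Real.exp (a1 * x) := Real.exp_le_exp.2 (by nlinarith)
    linarith

lemma wE_pos (a1 b1 x : ℝ) : 0 < wE a1 b1 x := by unfold wE; positivity

lemma one_le_wE (a1 b1 x : ℝ) : 1 ≤ wE a1 b1 x := by
  unfold wE
  have := Real.exp_pos (a1 * x)
  have := Real.exp_pos (b1 * x)
  linarith

lemma continuous_wE (a1 b1 : ℝ) : Continuous (wE a1 b1) := by unfold wE; fun_prop

lemma weight_integrable (K : Measure ℝ)
    (hKmin : ∫⁻ x : ℝ, ENNReal.ofReal (min 1 (x ^ 2)) ∂K ≠ ⊤)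
    (a b a1 b1 : ℝ) (h1 : a < a1) (h2 : a1 < 0) (h3 : 0 < b1) (h4 : b1 < b)
    (hKexp : ∀ s ∈ Set.Ioo a b,
      ∫⁻ x in {x : ℝ | 1 ≤ |x|}, ENNReal.ofReal (Real.exp (s * x)) ∂K ≠ ⊤)
    (n : ℕ) (hn : 2 ≤ n) : Integrable (fun x => |x| ^ n * wE a1 b1 x) K := by
  obtain ⟨a2, ha2, ha2'⟩ := exists_between h1
  obtain ⟨b2, hb2, hb2'⟩ := exists_between h4
  have hS : MeasurableSet {x : ℝ | 1 ≤ |x|} := measurableSet_le measurable_const measurable_norm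
  have hcont : Continuous (fun x => |x| ^ n * wE a1 b1 x) :=
    (continuous_abs.pow n).mul (continuous_wE a1 b1)
  have key : ∀ s ∈ Set.Ioo a b, IntegrableOn (fun x => Real.exp (s * x)) {x : ℝ | 1 ≤ |x|} K := by
    intro s hs
    refine (lintegral_ofReal_ne_top_iff_integrable ?_ ?_).1 (hKexp s hs)
    · exact Continuous.aestronglyMeasurable (by fun_prop)
    · exact Filter.Eventually.of_forall fun x => (Real.exp_pos _).le
  have hmin : Integrable (fun x : ℝ => min 1 (x ^ 2)) K := by
    refine (lintegral_ofReal_ne_top_iff_integrable ?_ ?_).1 hKmin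
    · exact Continuous.aestronglyMeasurable (by fun_prop)
    · exact Filter.Eventually.of_forall fun x => le_min zero_le_one (sq_nonneg x)
  rw [← integrableOn_univ, ← Set.union_compl_self {x : ℝ | 1 ≤ |x|}]
  refine IntegrableOn.union ?_ ?_
  · set ε := min (a1 - a2) (b2 - b1) with hε
    have hεpos : 0 < ε := lt_min (by linarith) (by linarith)
    have hε1 : ε ≤ a1 - a2 := min_le_left _ _
    have hε2 : ε ≤ b2 - b1 := min_le_right _ _
    have hI := ((key a2 ⟨ha2, by linarith⟩).add (key b2 ⟨by linarith, hb2'⟩)).const_mul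
      (3 * (n.factorial / ε ^ n))
    refine Integrable.mono' hI hcont.aestronglyMeasurable (Filter.Eventually.of_forall fun x => ?_)
    rw [Real.norm_eq_abs, abs_of_nonneg (mul_nonneg (by positivity) (wE_pos _ _ _).le)]
    have hp : |x| ^ n ≤ (n.factorial / ε ^ n) * Real.exp (ε * |x|) := by
      have := Real.pow_div_factorial_le_exp (ε * |x|) (by positivity) n
      have hf : (0:ℝ) < n.factorial := by exact_mod_cast n.factorial_pos
      rw [div_le_iff₀ hf, mul_pow] at this
      rw [div_mul_eq_mul_div, le_div_iff₀ (by positivity)]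
      linarith
    have hq : Real.exp (ε * |x|) * wE a1 b1 x ≤ 3 * (Real.exp (a2 * x) + Real.exp (b2 * x)) := by
      have hA := Real.exp_pos (a2 * x)
      have hB := Real.exp_pos (b2 * x)
      unfold wE
      rw [mul_add, mul_add, mul_one, ← Real.exp_add, ← Real.exp_add]
      rcases le_total 0 x with h | h
      · rw [abs_of_nonneg h]
        have e1 : Real.exp (ε * x) ≤ Real.exp (b2 * x) := Real.exp_le_exp.2 (by nlinarith)
        have e2 : Real.exp (ε * x + a1 * x) ≤ Real.exp (b2 * x) := Real.exp_le_exp.2 (by nlinarith)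
        have e3 : Real.exp (ε * x + b1 * x) ≤ Real.exp (b2 * x) := Real.exp_le_exp.2 (by nlinarith)
        linarith
      · rw [abs_of_nonpos h]
        have e1 : Real.exp (ε * -x) ≤ Real.exp (a2 * x) := Real.exp_le_exp.2 (by nlinarith)
        have e2 : Real.exp (ε * -x + a1 * x) ≤ Real.exp (a2 * x) := Real.exp_le_exp.2 (by nlinarith)
        have e3 : Real.exp (ε * -x + b1 * x) ≤ Real.exp (a2 * x) := Real.exp_le_exp.2 (by nlinarith)
        linarith
    calc |x| ^ n * wE a1 b1 x ≤ (n.factorial / ε ^ n) * Real.exp (ε * |x|) * wE a1 b1 x := by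
          have := (wE_pos a1 b1 x).le
          gcongr
      _ = (n.factorial / ε ^ n) * (Real.exp (ε * |x|) * wE a1 b1 x) := by ring
      _ ≤ (n.factorial / ε ^ n) * (3 * (Real.exp (a2 * x) + Real.exp (b2 * x))) := by gcongr
      _ = _ := by simp; ring
  · have hI := (hmin.const_mul (1 + Real.exp (-a1) + Real.exp b1)).integrableOn (s := {x : ℝ | 1 ≤ |x|}ᶜ)
    refine Integrable.mono' hI hcont.aestronglyMeasurable ?_
    refine (ae_restrict_mem hS.compl).mono fun x hx => ?_
    rw [Real.norm_eq_abs, abs_of_nonneg (mul_nonneg (by positivity) (wE_pos _ _ _).le)]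
    have hx' : |x| ≤ 1 := by
      simp only [mem_compl_iff, mem_ofPred_eq, not_le] at hx
      exact hx.le
    have hx2 := abs_le.1 hx'
    have e0 : |x| ^ n ≤ x ^ 2 := by
      rw [← sq_abs x]
      exact pow_le_pow_of_le_one (abs_nonneg x) hx' hn
    have e1 : x ^ 2 ≤ 1 := by nlinarith
    rw [min_eq_right e1, mul_comm]
    have e2 : wE a1 b1 x ≤ 1 + Real.exp (-a1) + Real.exp b1 := by
      unfold wE
      have : Real.exp (a1 * x) ≤ Real.exp (-a1) := Real.exp_le_exp.2 (by nlinarith)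
      have : Real.exp (b1 * x) ≤ Real.exp b1 := Real.exp_le_exp.2 (by nlinarith)
      linarith
    gcongr

/-- the moments `∫ x^(2+k) φ_k(λ z x) K(dx)` -/
noncomputable def GK (K : Measure ℝ) (k : ℕ) (lam : ℝ) (z : ℂ) : ℂ :=
  ∫ x : ℝ, (x : ℂ) ^ (2 + k) * phiK k ((lam : ℂ) * z * (x : ℂ)) ∂K

lemma GK_integrand_le (a1 b1 : ℝ) (k : ℕ) (lam : ℝ) (z : ℂ) (x : ℝ)
    (h1 : a1 ≤ lam * z.re) (h2 : lam * z.re ≤ b1) :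
    ‖(x : ℂ) ^ (2 + k) * phiK k ((lam : ℂ) * z * (x : ℂ))‖ ≤ 2 * (|x| ^ (2 + k) * wE a1 b1 x) := by
  rw [norm_mul, norm_pow, Complex.norm_real, Real.norm_eq_abs]
  have h := norm_phiK_le k ((lam : ℂ) * z * (x : ℂ))
  have h3 : ((lam : ℂ) * z * (x : ℂ)).re = lam * z.re * x := by simp
  rw [h3] at h
  have h4 := exp_le_wE a1 b1 _ x h1 h2
  have h5 := one_le_wE a1 b1 x
  calc _ ≤ |x| ^ (2 + k) * (2 * wE a1 b1 x) := by gcongr; linarith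
    _ = _ := by ring

lemma GK_integrand_cont (k : ℕ) (lam : ℝ) (z : ℂ) :
    Continuous fun x : ℝ => (x : ℂ) ^ (2 + k) * phiK k ((lam : ℂ) * z * (x : ℂ)) := by
  have := continuous_phiK k
  fun_prop

/-- integrability of the weights, packaged -/
def WI (K : Measure ℝ) (a1 b1 : ℝ) : Prop :=
  ∀ n : ℕ, 2 ≤ n → Integrable (fun x => |x| ^ n * wE a1 b1 x) K

lemma GK_integrable {K : Measure ℝ} {a1 b1 : ℝ} (hW : WI K a1 b1) (k : ℕ) (lam : ℝ) (z : ℂ)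
    (h1 : a1 ≤ lam * z.re) (h2 : lam * z.re ≤ b1) :
    Integrable (fun x : ℝ => (x : ℂ) ^ (2 + k) * phiK k ((lam : ℂ) * z * (x : ℂ))) K :=
  Integrable.mono' ((hW (2 + k) (by omega)).const_mul 2)
    (GK_integrand_cont k lam z).aestronglyMeasurable
    (Filter.Eventually.of_forall fun x => GK_integrand_le a1 b1 k lam z x h1 h2)

lemma GK_norm_le {K : Measure ℝ} {a1 b1 : ℝ} (hW : WI K a1 b1) (k : ℕ) (lam : ℝ) (z : ℂ)
    (h1 : a1 ≤ lam * z.re) (h2 : lam * z.re ≤ b1) :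
    ‖GK K k lam z‖ ≤ ∫ x, 2 * (|x| ^ (2 + k) * wE a1 b1 x) ∂K :=
  norm_integral_le_of_norm_le ((hW (2 + k) (by omega)).const_mul 2)
    (Filter.Eventually.of_forall fun x => GK_integrand_le a1 b1 k lam z x h1 h2)

lemma GK_hasDerivAt {K : Measure ℝ} {a1 b1 : ℝ} (hW : WI K a1 b1) (k : ℕ) (lam : ℝ) (z : ℂ)
    (h1 : a1 < lam * z.re) (h2 : lam * z.re < b1) :
    HasDerivAt (fun lam => GK K k lam z) (z * GK K (k+1) lam z) lam := by
  have hs : {l : ℝ | a1 < l * z.re ∧ l * z.re < b1} ∈ nhds lam := by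
    have ho : IsOpen {l : ℝ | a1 < l * z.re ∧ l * z.re < b1} :=
      (isOpen_lt (f := fun _ : ℝ => a1) (g := fun l : ℝ => l * z.re) (by fun_prop) (by fun_prop)).inter
        (isOpen_lt (f := fun l : ℝ => l * z.re) (g := fun _ : ℝ => b1) (by fun_prop) (by fun_prop))
    exact ho.mem_nhds ⟨h1, h2⟩
  have := hasDerivAt_integral_of_dominated_loc_of_deriv_le (μ := K) (x₀ := lam) (hs := hs)
    (F := fun (l : ℝ) (x : ℝ) => (x : ℂ) ^ (2 + k) * phiK k ((l : ℂ) * z * (x : ℂ)))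
    (F' := fun (l : ℝ) (x : ℝ) => z * ((x : ℂ) ^ (2 + (k+1)) * phiK (k+1) ((l : ℂ) * z * (x : ℂ))))
    (bound := fun x => ‖z‖ * (2 * (|x| ^ (2 + (k+1)) * wE a1 b1 x)))
    (Filter.Eventually.of_forall fun l => (GK_integrand_cont k l z).aestronglyMeasurable)
    (GK_integrable hW k lam z h1.le h2.le)
    ((GK_integrand_cont (k+1) lam z).const_smul z).aestronglyMeasurable
    (Filter.Eventually.of_forall fun x l hl => by
      rw [norm_mul]
      have := GK_integrand_le a1 b1 (k+1) l z x hl.1.le hl.2.le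
      gcongr)
    (((hW (2 + (k+1)) (by omega)).const_mul 2).const_mul _)
    (Filter.Eventually.of_forall fun x l hl => by
      have h0 : HasDerivAt (fun θ : ℝ => (θ:ℂ)) 1 l := Complex.ofRealCLM.hasDerivAt
      have h1 : HasDerivAt (fun l : ℝ => (l : ℂ) * z * (x : ℂ)) (z * x) l := by
        simpa using (h0.mul_const z).mul_const (x:ℂ)
      have h2 := HasDerivAt.comp l (phiK_hasDerivAt k ((l : ℂ) * z * (x : ℂ))) h1
      have h3 := h2.const_mul ((x : ℂ) ^ (2 + k))
      refine h3.congr_deriv ?_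
      ring)
  have h := this.2
  rw [integral_const_mul] at h
  exact h

lemma GK_continuous {K : Measure ℝ} {a1 b1 : ℝ} (hW : WI K a1 b1) (k : ℕ) (lam r : ℝ)
    (h1 : a1 ≤ lam * r) (h2 : lam * r ≤ b1) :
    Continuous (fun y : ℝ => GK K k lam (zLine r y)) := by
  have hre : ∀ y, (zLine r y).re = r := by intro y; simp [zLine]
  refine continuous_of_dominated (bound := fun x => 2 * (|x| ^ (2 + k) * wE a1 b1 x)) ?_ ?_
    ((hW (2 + k) (by omega)).const_mul 2) ?_
  · intro y
    exact (GK_integrand_cont k lam _).aestronglyMeasurable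
  · intro y
    refine Filter.Eventually.of_forall fun x => GK_integrand_le a1 b1 k lam _ x ?_ ?_ <;> rwa [hre]
  · refine Filter.Eventually.of_forall fun x => ?_
    have := continuous_phiK k
    unfold zLine
    fun_prop

lemma kappa_eq (μ c : ℝ) (K : Measure ℝ) (lam : ℝ) (z : ℂ) :
    kappa μ c K lam z = (μ : ℂ) * z + (c : ℂ) / 2 * z ^ 2 + z ^ 2 * GK K 0 lam z := by
  unfold kappa GK
  split_ifs with h
  · subst h
    have : ∀ x : ℝ, (x : ℂ) ^ (2 + 0) * phiK 0 (((0:ℝ) : ℂ) * z * (x : ℂ)) = ((x ^ 2 / 2 : ℝ) : ℂ) := by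
      intro x
      have := phiK_at_zero 0
      simp only [Complex.ofReal_zero, zero_mul, this]
      push_cast
      ring
    simp_rw [this]
    rw [integral_complex_ofReal, integral_div]
    push_cast
    ring
  · have hl : (lam : ℂ) ≠ 0 := by exact_mod_cast h
    have : ∀ x : ℝ, (Complex.exp ((lam : ℂ) * z * (x : ℂ)) - 1 - (lam : ℂ) * z * (x : ℂ))
        = ((lam : ℂ) * z) ^ 2 * ((x : ℂ) ^ (2 + 0) * phiK 0 ((lam : ℂ) * z * (x : ℂ))) := by
      intro x
      rw [← phiK_zero_identity]
      ring
    simp_rw [this]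
    rw [integral_const_mul]
    field_simp

lemma GK_at_zero (K : Measure ℝ) (k : ℕ) (z : ℂ) :
    GK K k 0 z = ((∫ x : ℝ, x ^ (2 + k) ∂K : ℝ) : ℂ) / (((k:ℂ) + 1) * ((k:ℂ) + 2)) := by
  unfold GK
  simp only [Complex.ofReal_zero, zero_mul, phiK_at_zero]
  rw [integral_mul_const, ← integral_complex_ofReal]
  push_cast
  ring

/-- continuous in `y`, polynomially bounded in `y` uniformly for `λ ∈ U` -/
def PB (U : Set ℝ) (F : ℝ → ℝ → ℂ) : Prop :=
  (∀ l ∈ U, Continuous (F l)) ∧ ∃ C : ℝ, ∃ N : ℕ, 0 ≤ C ∧ ∀ l ∈ U, ∀ y, ‖F l y‖ ≤ C * (1 + |y|) ^ N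

lemma PB.add {U : Set ℝ} {F G : ℝ → ℝ → ℂ} (hF : PB U F) (hG : PB U G) :
    PB U (fun l y => F l y + G l y) := by
  obtain ⟨cF, C, N, hC, bF⟩ := hF
  obtain ⟨cG, C', N', hC', bG⟩ := hG
  refine ⟨fun l hl => (cF l hl).add (cG l hl), C + C', N + N', by positivity, fun l hl y => ?_⟩
  have h1 : (1:ℝ) ≤ 1 + |y| := by have := abs_nonneg y; linarith
  calc ‖F l y + G l y‖ ≤ ‖F l y‖ + ‖G l y‖ := norm_add_le _ _
    _ ≤ C * (1 + |y|) ^ N + C' * (1 + |y|) ^ N' := add_le_add (bF l hl y) (bG l hl y)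
    _ ≤ C * (1 + |y|) ^ (N + N') + C' * (1 + |y|) ^ (N + N') := by
        gcongr <;> first | exact h1 | omega
    _ = _ := by ring

lemma PB.mul {U : Set ℝ} {F G : ℝ → ℝ → ℂ} (hF : PB U F) (hG : PB U G) :
    PB U (fun l y => F l y * G l y) := by
  obtain ⟨cF, C, N, hC, bF⟩ := hF
  obtain ⟨cG, C', N', hC', bG⟩ := hG
  refine ⟨fun l hl => (cF l hl).mul (cG l hl), C * C', N + N', by positivity, fun l hl y => ?_⟩
  rw [norm_mul]
  calc _ ≤ (C * (1 + |y|) ^ N) * (C' * (1 + |y|) ^ N') :=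
        mul_le_mul (bF l hl y) (bG l hl y) (norm_nonneg _) (by positivity)
    _ = _ := by ring

lemma PB.const {U : Set ℝ} (a : ℂ) : PB U (fun _ _ => a) :=
  ⟨fun _ _ => continuous_const, ‖a‖, 0, norm_nonneg _, fun _ _ _ => by simp⟩

lemma PB.congr {U : Set ℝ} {F G : ℝ → ℝ → ℂ} (hF : PB U F) (h : ∀ l y, F l y = G l y) : PB U G := by
  have : F = G := by funext l y; exact h l y
  exact this ▸ hF

lemma PB.neg {U : Set ℝ} {F : ℝ → ℝ → ℂ} (hF : PB U F) : PB U (fun l y => -F l y) :=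
  ((PB.const (-1)).mul hF).congr fun l y => by ring

lemma PB.zLine {U : Set ℝ} (r : ℝ) : PB U (fun _ y => zLine r y) := by
  refine ⟨fun _ _ => by unfold _root_.zLine; fun_prop, |r| + 1, 1, by positivity, fun l _ y => ?_⟩
  unfold _root_.zLine
  calc _ ≤ ‖(r:ℂ)‖ + ‖(y:ℂ) * Complex.I‖ := norm_add_le _ _
    _ = |r| + |y| := by simp
    _ ≤ _ := by nlinarith [abs_nonneg r, abs_nonneg y, mul_nonneg (abs_nonneg r) (abs_nonneg y)]

structure Jet (U : Set ℝ) (F0 F1 F2 : ℝ → ℝ → ℂ) : Prop where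
  b0 : PB U F0
  b1 : PB U F1
  b2 : PB U F2
  d0 : ∀ l ∈ U, ∀ y, HasDerivAt (fun l => F0 l y) (F1 l y) l
  d1 : ∀ l ∈ U, ∀ y, HasDerivAt (fun l => F1 l y) (F2 l y) l
  c2 : ∀ y, ContinuousOn (fun l => F2 l y) U

section
variable {U : Set ℝ} {F0 F1 F2 G0 G1 G2 : ℝ → ℝ → ℂ}

lemma Jet.c0 (hF : Jet U F0 F1 F2) (y : ℝ) : ContinuousOn (fun l => F0 l y) U :=
  fun l hl => (hF.d0 l hl y).continuousAt.continuousWithinAt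

lemma Jet.c1 (hF : Jet U F0 F1 F2) (y : ℝ) : ContinuousOn (fun l => F1 l y) U :=
  fun l hl => (hF.d1 l hl y).continuousAt.continuousWithinAt

lemma Jet.congr (hF : Jet U F0 F1 F2) (h0 : ∀ l y, F0 l y = G0 l y) (h1 : ∀ l y, F1 l y = G1 l y)
    (h2 : ∀ l y, F2 l y = G2 l y) : Jet U G0 G1 G2 := by
  have e0 : F0 = G0 := by funext l y; exact h0 l y
  have e1 : F1 = G1 := by funext l y; exact h1 l y
  have e2 : F2 = G2 := by funext l y; exact h2 l y
  subst e0 e1 e2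
  exact hF

lemma Jet.mono {V : Set ℝ} (hF : Jet U F0 F1 F2) (h : V ⊆ U) : Jet V F0 F1 F2 where
  b0 := ⟨fun l hl => hF.b0.1 l (h hl), let ⟨C, N, hC, hb⟩ := hF.b0.2; ⟨C, N, hC, fun l hl => hb l (h hl)⟩⟩
  b1 := ⟨fun l hl => hF.b1.1 l (h hl), let ⟨C, N, hC, hb⟩ := hF.b1.2; ⟨C, N, hC, fun l hl => hb l (h hl)⟩⟩
  b2 := ⟨fun l hl => hF.b2.1 l (h hl), let ⟨C, N, hC, hb⟩ := hF.b2.2; ⟨C, N, hC, fun l hl => hb l (h hl)⟩⟩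
  d0 := fun l hl => hF.d0 l (h hl)
  d1 := fun l hl => hF.d1 l (h hl)
  c2 := fun y => (hF.c2 y).mono h

lemma Jet.of_const {A : ℝ → ℂ} (hA : PB U (fun _ y => A y)) :
    Jet U (fun _ y => A y) (fun _ _ => 0) (fun _ _ => 0) where
  b0 := hA
  b1 := PB.const 0
  b2 := PB.const 0
  d0 := fun l _ y => hasDerivAt_const l (A y)
  d1 := fun l _ _ => hasDerivAt_const l 0
  c2 := fun _ => continuousOn_const

lemma Jet.add (hF : Jet U F0 F1 F2) (hG : Jet U G0 G1 G2) :
    Jet U (fun l y => F0 l y + G0 l y) (fun l y => F1 l y + G1 l y) (fun l y => F2 l y + G2 l y) where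
  b0 := hF.b0.add hG.b0
  b1 := hF.b1.add hG.b1
  b2 := hF.b2.add hG.b2
  d0 := fun l hl y => (hF.d0 l hl y).add (hG.d0 l hl y)
  d1 := fun l hl y => (hF.d1 l hl y).add (hG.d1 l hl y)
  c2 := fun y => (hF.c2 y).add (hG.c2 y)

lemma Jet.mul (hF : Jet U F0 F1 F2) (hG : Jet U G0 G1 G2) :
    Jet U (fun l y => F0 l y * G0 l y) (fun l y => F1 l y * G0 l y + F0 l y * G1 l y)
      (fun l y => F2 l y * G0 l y + 2 * (F1 l y * G1 l y) + F0 l y * G2 l y) where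
  b0 := hF.b0.mul hG.b0
  b1 := (hF.b1.mul hG.b0).add (hF.b0.mul hG.b1)
  b2 := ((hF.b2.mul hG.b0).add ((PB.const 2).mul (hF.b1.mul hG.b1))).add (hF.b0.mul hG.b2)
  d0 := fun l hl y => (hF.d0 l hl y).mul (hG.d0 l hl y)
  d1 := fun l hl y => by
    refine (((hF.d1 l hl y).mul (hG.d0 l hl y)).add ((hF.d0 l hl y).mul (hG.d1 l hl y))).congr_deriv ?_
    ring
  c2 := fun y => ((((hF.c2 y).mul (hG.c0 y)).add
    (continuousOn_const.mul ((hF.c1 y).mul (hG.c1 y)))).add ((hF.c0 y).mul (hG.c2 y)))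

lemma Jet.inv (hF : Jet U F0 F1 F2) (ε : ℝ) (hε : 0 < ε) (hlow : ∀ l ∈ U, ∀ y, ε ≤ ‖F0 l y‖) :
    Jet U (fun l y => (F0 l y)⁻¹) (fun l y => -F1 l y * ((F0 l y)⁻¹ * (F0 l y)⁻¹))
      (fun l y => -F2 l y * ((F0 l y)⁻¹ * (F0 l y)⁻¹) +
        2 * (F1 l y * F1 l y * ((F0 l y)⁻¹ * (F0 l y)⁻¹ * (F0 l y)⁻¹))) := by
  have hne : ∀ l ∈ U, ∀ y, F0 l y ≠ 0 := fun l hl y h => by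
    have := hlow l hl y
    rw [h, norm_zero] at this
    linarith
  have hb : PB U (fun l y => (F0 l y)⁻¹) := by
    refine ⟨fun l hl => (hF.b0.1 l hl).inv₀ (hne l hl), ε⁻¹, 0, by positivity, fun l hl y => ?_⟩
    rw [norm_inv, pow_zero, mul_one]
    exact inv_anti₀ hε (hlow l hl y)
  have hd : ∀ l ∈ U, ∀ y, HasDerivAt (fun l => (F0 l y)⁻¹) (-F1 l y * ((F0 l y)⁻¹ * (F0 l y)⁻¹)) l := by
    intro l hl y
    refine ((hF.d0 l hl y).inv (hne l hl y)).congr_deriv ?_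
    rw [div_eq_mul_inv, sq, mul_inv]
  have hc : ∀ y, ContinuousOn (fun l => (F0 l y)⁻¹) U := fun y l hl =>
    (hd l hl y).continuousAt.continuousWithinAt
  refine ⟨hb, hF.b1.neg.mul (hb.mul hb), (hF.b2.neg.mul (hb.mul hb)).add
    ((PB.const 2).mul ((hF.b1.mul hF.b1).mul ((hb.mul hb).mul hb))), hd, ?_, ?_⟩
  · intro l hl y
    refine ((hF.d1 l hl y).neg.mul ((hd l hl y).mul (hd l hl y))).congr_deriv ?_
    simp only [Pi.neg_apply, Pi.mul_apply]
    ring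
  · intro y
    exact ((hF.c2 y).neg.mul ((hc y).mul (hc y))).add (continuousOn_const.mul
      (((hF.c1 y).mul (hF.c1 y)).mul (((hc y).mul (hc y)).mul (hc y))))

lemma Jet.exp (hF : Jet U F0 F1 F2) (C : ℝ) (hC : ∀ l ∈ U, ∀ y, (F0 l y).re ≤ C) :
    Jet U (fun l y => Complex.exp (F0 l y)) (fun l y => Complex.exp (F0 l y) * F1 l y)
      (fun l y => Complex.exp (F0 l y) * (F2 l y + F1 l y * F1 l y)) := by
  have hb : PB U (fun l y => Complex.exp (F0 l y)) := by
    refine ⟨fun l hl => (hF.b0.1 l hl).cexp, Real.exp C, 0, by positivity, fun l hl y => ?_⟩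
    rw [Complex.norm_exp, pow_zero, mul_one]
    exact Real.exp_le_exp.2 (hC l hl y)
  have hd : ∀ l ∈ U, ∀ y, HasDerivAt (fun l => Complex.exp (F0 l y)) (Complex.exp (F0 l y) * F1 l y) l :=
    fun l hl y => (hF.d0 l hl y).cexp
  refine ⟨hb, hb.mul hF.b1, hb.mul (hF.b2.add (hF.b1.mul hF.b1)), hd, ?_, ?_⟩
  · intro l hl y
    refine ((hd l hl y).mul (hF.d1 l hl y)).congr_deriv ?_
    ring
  · intro y
    exact (hF.c0 y).cexp.mul ((hF.c2 y).add ((hF.c1 y).mul (hF.c1 y)))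

/-- weights against which every polynomially bounded function is integrable -/
def RapidDecay (p : ℝ → ℂ) : Prop :=
  Continuous p ∧ ∀ N : ℕ, Integrable (fun y : ℝ => (1 + |y|) ^ N * ‖p y‖)

lemma PB.integrable {F : ℝ → ℝ → ℂ} {p : ℝ → ℂ} (hF : PB U F) (hp : RapidDecay p) (l : ℝ) (hl : l ∈ U) :
    Integrable (fun y => F l y * p y) := by
  obtain ⟨cF, C, N, hC, bF⟩ := hF
  refine Integrable.mono' ((hp.2 N).const_mul C) ((cF l hl).mul hp.1).aestronglyMeasurable
    (Filter.Eventually.of_forall fun y => ?_)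
  rw [norm_mul, ← mul_assoc]
  exact mul_le_mul_of_nonneg_right (bF l hl y) (norm_nonneg _)

lemma PB.hasDerivAt {F F' : ℝ → ℝ → ℂ} {p : ℝ → ℂ} (hU : IsOpen U) (hF : PB U F) (hF' : PB U F')
    (hd : ∀ l ∈ U, ∀ y, HasDerivAt (fun l => F l y) (F' l y) l)
    (hp : RapidDecay p) (l : ℝ) (hl : l ∈ U) :
    HasDerivAt (fun l => ∫ y, F l y * p y) (∫ y, F' l y * p y) l := by
  obtain ⟨cF', C, N, hC, bF'⟩ := id hF'
  refine (hasDerivAt_integral_of_dominated_loc_of_deriv_le (hs := hU.mem_nhds hl)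
    (F := fun l y => F l y * p y) (F' := fun l y => F' l y * p y)
    (bound := fun y => C * ((1 + |y|) ^ N * ‖p y‖)) ?_ (hF.integrable hp l hl)
    (hF'.integrable hp l hl).aestronglyMeasurable ?_ ((hp.2 N).const_mul C) ?_).2
  · filter_upwards [hU.mem_nhds hl] with x hx
    exact (hF.integrable hp x hx).aestronglyMeasurable
  · refine Filter.Eventually.of_forall fun y x hx => ?_
    rw [norm_mul, ← mul_assoc]
    exact mul_le_mul_of_nonneg_right (bF' x hx y) (norm_nonneg _)
  · exact Filter.Eventually.of_forall fun y x hx => (hd x hx y).mul_const (p y)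

lemma PB.continuousOn {F : ℝ → ℝ → ℂ} {p : ℝ → ℂ} (hF : PB U F)
    (hc : ∀ y, ContinuousOn (fun l => F l y) U) (hp : RapidDecay p) :
    ContinuousOn (fun l => ∫ y, F l y * p y) U := by
  obtain ⟨cF, C, N, hC, bF⟩ := id hF
  refine continuousOn_of_dominated (bound := fun y => C * ((1 + |y|) ^ N * ‖p y‖)) ?_ ?_
    ((hp.2 N).const_mul C) ?_
  · exact fun x hx => (hF.integrable hp x hx).aestronglyMeasurable
  · refine fun x hx => Filter.Eventually.of_forall fun y => ?_
    rw [norm_mul, ← mul_assoc]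
    exact mul_le_mul_of_nonneg_right (bF x hx y) (norm_nonneg _)
  · exact Filter.Eventually.of_forall fun y => (hc y).mul continuousOn_const

lemma Jet.integral {p : ℝ → ℂ} (hU : IsOpen U) (hIcc : Set.Icc 0 1 ⊆ U) (hF : Jet U F0 F1 F2)
    (hp : RapidDecay p) (ξ : ℝ → ℂ) (hξ : ∀ l, ξ l = ∫ y, F0 l y * p y) :
    ContDiffOn ℝ 2 ξ (Set.Icc 0 1) ∧
    iteratedDerivWithin 1 ξ (Set.Icc 0 1) 0 = ∫ y, F1 0 y * p y ∧
    iteratedDerivWithin 2 ξ (Set.Icc 0 1) 0 = ∫ y, F2 0 y * p y := by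
  have hξ' : ξ = fun l => ∫ y, F0 l y * p y := funext hξ
  have D0 : ∀ l ∈ U, HasDerivAt ξ (∫ y, F1 l y * p y) l := by
    rw [hξ']
    exact fun l hl => PB.hasDerivAt hU hF.b0 hF.b1 hF.d0 hp l hl
  have D1 : ∀ l ∈ U, HasDerivAt (fun l => ∫ y, F1 l y * p y) (∫ y, F2 l y * p y) l :=
    fun l hl => PB.hasDerivAt hU hF.b1 hF.b2 hF.d1 hp l hl
  have C2 := PB.continuousOn hF.b2 hF.c2 hp
  have hu := uniqueDiffOn_Icc (zero_lt_one (α := ℝ))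
  have E1 : ∀ l ∈ Set.Icc (0:ℝ) 1, derivWithin ξ (Set.Icc 0 1) l = ∫ y, F1 l y * p y :=
    fun l hl => (D0 l (hIcc hl)).hasDerivWithinAt.derivWithin (hu l hl)
  have E2 : ∀ l ∈ Set.Icc (0:ℝ) 1, derivWithin (derivWithin ξ (Set.Icc 0 1)) (Set.Icc 0 1) l
      = ∫ y, F2 l y * p y := fun l hl => by
    rw [derivWithin_congr E1 (E1 l hl)]
    exact (D1 l (hIcc hl)).hasDerivWithinAt.derivWithin (hu l hl)
  have h0 : (0:ℝ) ∈ Set.Icc (0:ℝ) 1 := by simp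
  refine ⟨?_, ?_, ?_⟩
  · have : ((2:ℕ) : WithTop ℕ∞) = 1 + 1 := by norm_num
    have h2 : (2 : WithTop ℕ∞) = 1 + 1 := by norm_num
    rw [h2, contDiffOn_succ_iff_derivWithin hu]
    refine ⟨fun l hl => (D0 l (hIcc hl)).differentiableAt.differentiableWithinAt, by simp, ?_⟩
    have h1 : (1 : WithTop ℕ∞) = 0 + 1 := by norm_num
    rw [h1, contDiffOn_succ_iff_derivWithin hu]
    refine ⟨?_, by simp, ?_⟩
    · intro l hl
      refine ((D1 l (hIcc hl)).differentiableAt.differentiableWithinAt).congr E1 (E1 l hl)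
    · rw [contDiffOn_zero]
      exact (C2.mono hIcc).congr E2
  · rw [iteratedDerivWithin_one]
    exact E1 0 h0
  · rw [iteratedDerivWithin_succ, ← E2 0 h0]
    refine derivWithin_congr (fun x hx => ?_) ?_ <;> rw [iteratedDerivWithin_one]

end

lemma rapidDecay_pCoef (l : ℝ → ℝ) (hl : ContDiff ℝ (⊤ : ℕ∞) l)
    (hlint : ∀ n : ℕ, Integrable (iteratedDeriv n l)) : RapidDecay (pCoef l) := by
  set L : ℝ → ℂ := fun x => (l x : ℂ) with hL
  have hLc : ContDiff ℝ (⊤ : ℕ∞) L := Complex.ofRealCLM.contDiff.comp hl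
  have hLd : ∀ n, iteratedDeriv n L = fun x => ((iteratedDeriv n l x : ℝ) : ℂ) := by
    intro n
    induction n with
    | zero => simp [hL]
    | succ n ih =>
      funext x
      rw [iteratedDeriv_succ, ih, iteratedDeriv_succ]
      have hd : DifferentiableAt ℝ (iteratedDeriv n l) x :=
        (hl.differentiable_iteratedDeriv n (by exact_mod_cast WithTop.coe_lt_top n)) x
      exact (HasDerivAt.ofReal_comp hd.hasDerivAt).deriv
  have hLi : ∀ n : ℕ, Integrable (iteratedDeriv n L) := by
    intro n
    rw [hLd]
    exact (hlint n).ofReal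
  have hp : ∀ y, pCoef l y = (FourierTransform.fourier L) (y / (2 * Real.pi)) / (2 * (Real.pi : ℂ)) := by
    intro y
    unfold pCoef lhat
    rw [Real.fourier_eq']
    congr 1
    refine integral_congr_ae (Filter.Eventually.of_forall fun x => ?_)
    simp only [hL, smul_eq_mul]
    rw [mul_comm]
    congr 2
    have : (Real.pi : ℂ) ≠ 0 := by exact_mod_cast Real.pi_ne_zero
    simp
    field_simp
  have hcont : Continuous (pCoef l) := by
    have : Continuous (FourierTransform.fourier L) := by
      have h0 := hLi 0
      rw [iteratedDeriv_zero] at h0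
      exact VectorFourier.fourierIntegral_continuous Real.continuous_fourierChar
        (by exact continuous_inner) h0
    have h2 : pCoef l = fun y => (FourierTransform.fourier L) (y / (2 * Real.pi)) / (2 * (Real.pi : ℂ)) :=
      funext hp
    rw [h2]
    fun_prop
  have hbd : ∀ n : ℕ, ∃ C, ∀ y, |y| ^ n * ‖pCoef l y‖ ≤ C := by
    intro n
    refine ⟨∫ x, ‖iteratedDeriv n L x‖, fun y => ?_⟩
    have h := Real.fourier_iteratedDeriv (n := n) (N := (⊤ : ℕ∞)) hLc (fun n _ => hLi n) (by simp)
    have h2 := congrFun h (y / (2 * Real.pi))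
    have h3 : ‖FourierTransform.fourier (iteratedDeriv n L) (y / (2 * Real.pi))‖ ≤ ∫ x, ‖iteratedDeriv n L x‖ := 
      VectorFourier.norm_fourierIntegral_le_integral_norm _ _ _ _ _
    rw [h2, norm_smul, norm_pow] at h3
    have hpi := Real.pi_pos
    have h4 : ‖(2 * (Real.pi:ℂ) * Complex.I * ((y / (2 * Real.pi) : ℝ) : ℂ))‖ = |y| := by
      simp [abs_of_pos hpi]
      field_simp
    rw [h4] at h3
    refine le_trans ?_ h3
    gcongr
    rw [hp, norm_div]
    apply div_le_self (norm_nonneg _)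
    simp [abs_of_pos hpi]
    nlinarith [Real.pi_gt_three]
  refine ⟨hcont, fun N => ?_⟩
  have hb2 : ∀ n : ℕ, ∃ C, ∀ y, (1 + |y|) ^ n * ‖pCoef l y‖ ≤ C := by
    intro n
    obtain ⟨C0, h0⟩ := hbd 0
    obtain ⟨C1, h1⟩ := hbd n
    refine ⟨2 ^ n * (C0 + C1), fun y => ?_⟩
    have : (1 + |y|) ^ n ≤ 2 ^ n * (1 + |y| ^ n) := by
      rcases le_total |y| 1 with h | h
      · calc (1 + |y|) ^ n ≤ 2 ^ n := by gcongr; linarith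
          _ ≤ _ := by
            have : 0 ≤ |y| ^ n := by positivity
            have : (0:ℝ) ≤ 2 ^ n := by positivity
            nlinarith
      · calc (1 + |y|) ^ n ≤ (2 * |y|) ^ n := by gcongr; linarith
          _ = 2 ^ n * |y| ^ n := mul_pow _ _ _
          _ ≤ _ := by gcongr; linarith
    calc _ ≤ 2 ^ n * (1 + |y| ^ n) * ‖pCoef l y‖ := by gcongr
      _ = 2 ^ n * (|y| ^ 0 * ‖pCoef l y‖ + |y| ^ n * ‖pCoef l y‖) := by ring
      _ ≤ _ := by
        have := h0 y
        have := h1 y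
        gcongr
  obtain ⟨C, hC⟩ := hb2 (N + 2)
  have hI := integrable_inv_one_add_sq.const_mul C
  refine Integrable.mono' hI (by fun_prop) (Filter.Eventually.of_forall fun y => ?_)
  rw [Real.norm_eq_abs, abs_of_nonneg (by positivity)]
  rw [← div_eq_mul_inv, le_div_iff₀ (by positivity)]
  refine le_trans ?_ (hC y)
  have h5 : 1 + y ^ 2 ≤ (1 + |y|) ^ 2 := by
    rw [← sq_abs y]; nlinarith [abs_nonneg y]
  calc _ ≤ (1 + |y|) ^ N * ‖pCoef l y‖ * (1 + |y|) ^ 2 := by gcongr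
    _ = _ := by ring

lemma zLine_re (r y : ℝ) : (zLine r y).re = r := by simp [zLine]

lemma zLine_add_one (r y : ℝ) : zLine r y + 1 = zLine (r + 1) y := by
  simp only [zLine]; push_cast; ring

lemma zLine_zero (r : ℝ) : zLine r 0 = (r : ℂ) := by simp [zLine]

lemma Jet.freeze {U : Set ℝ} {F0 F1 F2 : ℝ → ℝ → ℂ} (hF : Jet U F0 F1 F2) :
    Jet U (fun l _ => F0 l 0) (fun l _ => F1 l 0) (fun l _ => F2 l 0) := by
  have hb : ∀ F : ℝ → ℝ → ℂ, PB U F → PB U (fun l _ => F l 0) := by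
    rintro F ⟨_, C, N, hC, hb⟩
    refine ⟨fun _ _ => continuous_const, C, 0, hC, fun l hl y => ?_⟩
    simpa using hb l hl 0
  exact ⟨hb _ hF.b0, hb _ hF.b1, hb _ hF.b2, fun l hl _ => hF.d0 l hl 0,
    fun l hl _ => hF.d1 l hl 0, fun _ => hF.c2 0⟩

lemma GK_PB {K : Measure ℝ} {a1 b1 : ℝ} (hW : WI K a1 b1) (k : ℕ) (r : ℝ) :
    PB {l : ℝ | a1 < l * r ∧ l * r < b1} (fun l y => GK K k l (zLine r y)) := by
  refine ⟨fun l hl => GK_continuous hW k l r hl.1.le hl.2.le,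
    ∫ x, 2 * (|x| ^ (2 + k) * wE a1 b1 x) ∂K, 0, ?_, fun l hl y => ?_⟩
  · refine integral_nonneg fun x => ?_
    have := (wE_pos a1 b1 x).le
    simp only [Pi.zero_apply]
    positivity
  · rw [pow_zero, mul_one]
    apply GK_norm_le hW
    · rw [zLine_re]; exact hl.1.le
    · rw [zLine_re]; exact hl.2.le

lemma GK_jet {K : Measure ℝ} {a1 b1 : ℝ} (hW : WI K a1 b1) (r : ℝ) :
    Jet {l : ℝ | a1 < l * r ∧ l * r < b1} (fun l y => GK K 0 l (zLine r y))
      (fun l y => zLine r y * GK K 1 l (zLine r y))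
      (fun l y => zLine r y * (zLine r y * GK K 2 l (zLine r y))) := by
  have hd : ∀ k : ℕ, ∀ l ∈ {l : ℝ | a1 < l * r ∧ l * r < b1}, ∀ y,
      HasDerivAt (fun l => GK K k l (zLine r y)) (zLine r y * GK K (k+1) l (zLine r y)) l := by
    intro k l hl y
    apply GK_hasDerivAt hW
    · rw [zLine_re]; exact hl.1
    · rw [zLine_re]; exact hl.2
  refine ⟨GK_PB hW 0 r, (PB.zLine r).mul (GK_PB hW 1 r),
    (PB.zLine r).mul ((PB.zLine r).mul (GK_PB hW 2 r)), hd 0, ?_, ?_⟩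
  · intro l hl y
    exact (hd 1 l hl y).const_mul _
  · intro y l hl
    have := (hd 2 l hl y).continuousAt.continuousWithinAt (s := {l : ℝ | a1 < l * r ∧ l * r < b1})
    exact continuousWithinAt_const.mul (continuousWithinAt_const.mul this)

noncomputable def kap1 (K : Measure ℝ) (l : ℝ) (z : ℂ) : ℂ := z ^ 3 * GK K 1 l z
noncomputable def kap2 (K : Measure ℝ) (l : ℝ) (z : ℂ) : ℂ := z ^ 4 * GK K 2 l z

lemma kappa_jet {K : Measure ℝ} {a1 b1 : ℝ} (hW : WI K a1 b1) (μ c r : ℝ) :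
    Jet {l : ℝ | a1 < l * r ∧ l * r < b1} (fun l y => kappa μ c K l (zLine r y))
      (fun l y => kap1 K l (zLine r y)) (fun l y => kap2 K l (zLine r y)) := by
  have hz := Jet.of_const (PB.zLine (U := {l : ℝ | a1 < l * r ∧ l * r < b1}) r)
  have hμ := Jet.of_const (U := {l : ℝ | a1 < l * r ∧ l * r < b1}) (PB.const (μ : ℂ))
  have hc := Jet.of_const (U := {l : ℝ | a1 < l * r ∧ l * r < b1}) (PB.const ((c : ℂ) / 2))
  refine (((hμ.mul hz).add (hc.mul (hz.mul hz))).add ((hz.mul hz).mul (GK_jet hW r))).congr ?_ ?_ ?_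
  · intro l y; rw [kappa_eq]; ring
  · intro l y; unfold kap1; ring
  · intro l y; unfold kap2; ring

lemma Jet.sub {U : Set ℝ} {F0 F1 F2 G0 G1 G2 : ℝ → ℝ → ℂ}
    (hF : Jet U F0 F1 F2) (hG : Jet U G0 G1 G2) :
    Jet U (fun l y => F0 l y - G0 l y) (fun l y => F1 l y - G1 l y) (fun l y => F2 l y - G2 l y) := by
  refine (hF.add ((Jet.of_const (PB.const (-1))).mul hG)).congr ?_ ?_ ?_ <;> intro l y <;> ring

/-- admissible parameters -/
def VV (a1 b1 R : ℝ) : Set ℝ :=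
  {l : ℝ | a1 < l * R ∧ l * R < b1} ∩ {l : ℝ | a1 < l * (R + 1) ∧ l * (R + 1) < b1} ∩
  {l : ℝ | a1 < l * 1 ∧ l * 1 < b1} ∩ {l : ℝ | a1 < l * 2 ∧ l * 2 < b1}

lemma isOpen_Vr (a1 b1 r : ℝ) : IsOpen {l : ℝ | a1 < l * r ∧ l * r < b1} :=
  (isOpen_lt (f := fun _ : ℝ => a1) (g := fun l : ℝ => l * r) (by fun_prop) (by fun_prop)).inter
    (isOpen_lt (f := fun l : ℝ => l * r) (g := fun _ : ℝ => b1) (by fun_prop) (by fun_prop))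

lemma isOpen_VV (a1 b1 R : ℝ) : IsOpen (VV a1 b1 R) :=
  (((isOpen_Vr _ _ _).inter (isOpen_Vr _ _ _)).inter (isOpen_Vr _ _ _)).inter (isOpen_Vr _ _ _)

lemma Icc_subset_Vr (a1 b1 r : ℝ) (h1 : a1 < 0) (h2 : 0 < b1) (h3 : a1 < r) (h4 : r < b1) :
    Set.Icc 0 1 ⊆ {l : ℝ | a1 < l * r ∧ l * r < b1} := by
  rintro l ⟨hl0, hl1⟩
  rcases le_total 0 r with h | h
  · constructor <;> nlinarith
  · constructor <;> nlinarith

lemma kbarz_jet {K : Measure ℝ} {a1 b1 : ℝ} (hW : WI K a1 b1) (μ c R : ℝ) :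
    Jet (VV a1 b1 R) (fun l y => kbar μ c K l (zLine R y) 1)
      (fun l y => kap1 K l (zLine R y + 1) - kap1 K l (zLine R y) - kap1 K l 1)
      (fun l y => kap2 K l (zLine R y + 1) - kap2 K l (zLine R y) - kap2 K l 1) := by
  have j1 := (kappa_jet hW μ c R).mono (V := VV a1 b1 R) (fun l hl => hl.1.1.1)
  have j2 := (kappa_jet hW μ c (R+1)).mono (V := VV a1 b1 R) (fun l hl => hl.1.1.2)
  have j3 := ((kappa_jet hW μ c 1).mono (V := VV a1 b1 R) (fun l hl => hl.1.2)).freeze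
  refine ((j2.sub j1).sub j3).congr ?_ ?_ ?_ <;> intro l y <;>
    simp only [zLine_add_one, zLine_zero, kbar, Complex.ofReal_one]

lemma kbar1_jet {K : Measure ℝ} {a1 b1 : ℝ} (hW : WI K a1 b1) (μ c R : ℝ) :
    Jet (VV a1 b1 R) (fun l _ => kbar μ c K l 1 1)
      (fun l _ => kap1 K l 2 - kap1 K l 1 - kap1 K l 1)
      (fun l _ => kap2 K l 2 - kap2 K l 1 - kap2 K l 1) := by
  have j2 := ((kappa_jet hW μ c 2).mono (V := VV a1 b1 R) (fun l hl => hl.2)).freeze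
  have j3 := ((kappa_jet hW μ c 1).mono (V := VV a1 b1 R) (fun l hl => hl.1.2)).freeze
  have e : (1:ℂ) + 1 = ((2:ℝ):ℂ) := by push_cast; norm_num
  have e2 : (2:ℂ) = ((2:ℝ):ℂ) := by push_cast; norm_num
  refine ((j2.sub j3).sub j3).congr ?_ ?_ ?_ <;> intro l y <;>
    simp only [zLine_zero, kbar, Complex.ofReal_one, e, e2]

/-- real form of `κ(λ,r)` -/
lemma kappa_real (μ c : ℝ) (K : Measure ℝ) (l r : ℝ) :
    ∃ k : ℝ, kappa μ c K l (r : ℂ) = (k : ℂ) := by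
  unfold kappa
  split_ifs with h
  · exact ⟨μ * r + (c + ∫ x : ℝ, x ^ 2 ∂K) / 2 * r ^ 2, by push_cast; ring⟩
  · refine ⟨μ * r + c / 2 * r ^ 2 + (l ^ 2)⁻¹ * ∫ x : ℝ, (Real.exp (l * r * x) - 1 - l * r * x) ∂K, ?_⟩
    push_cast
    rw [← integral_complex_ofReal]
    push_cast
    rfl

lemma kbar11_eq {K : Measure ℝ} {a1 b1 : ℝ} (hW : WI K a1 b1) (μ c R : ℝ) (l : ℝ)
    (hl : l ∈ VV a1 b1 R) :
    ∃ h : ℝ → ℝ, Integrable h K ∧ (∀ x, 0 ≤ h x) ∧ (∀ x, h x = 0 → x = 0) ∧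
      kbar μ c K l 1 1 = ((c + ∫ x, h x ∂K : ℝ) : ℂ) := by
  have i2 := (GK_integrable hW 0 l 2 (by simpa using hl.2.1.le) (by simpa using hl.2.2.le)).const_mul 4
  have i1 := (GK_integrable hW 0 l 1 (by simpa using hl.1.2.1.le) (by simpa using hl.1.2.2.le)).const_mul 2
  have hi := i2.sub i1
  have hk : kbar μ c K l 1 1 = c + ∫ x : ℝ, (4 * ((x : ℂ) ^ (2 + 0) * phiK 0 ((l : ℂ) * 2 * (x : ℂ))) -
      2 * ((x : ℂ) ^ (2 + 0) * phiK 0 ((l : ℂ) * 1 * (x : ℂ)))) ∂K := by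
    rw [integral_sub i2 i1, integral_const_mul, integral_const_mul]
    unfold kbar
    have e : (1:ℂ) + 1 = 2 := by norm_num
    rw [e]
    simp only [kappa_eq, GK]
    ring
  rcases eq_or_ne l 0 with h0 | h0
  · subst h0
    have e : ∀ x : ℝ, (4 * ((x : ℂ) ^ (2 + 0) * phiK 0 (((0:ℝ) : ℂ) * 2 * (x : ℂ))) -
      2 * ((x : ℂ) ^ (2 + 0) * phiK 0 (((0:ℝ) : ℂ) * 1 * (x : ℂ)))) = ((x ^ 2 : ℝ) : ℂ) := by
      intro x
      have := phiK_at_zero 0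
      simp only [Complex.ofReal_zero, zero_mul, this]
      push_cast
      ring
    refine ⟨fun x => x ^ 2, ?_, fun x => sq_nonneg x, fun x hx => by simpa using hx, ?_⟩
    · have := hi.re
      refine this.congr (Filter.Eventually.of_forall fun x => ?_)
      simp only [Pi.sub_apply]
      rw [e]
      exact Complex.ofReal_re _
    · rw [hk]
      simp_rw [e]
      rw [integral_complex_ofReal]
      push_cast
      rfl
  · have hlc : (l : ℂ) ≠ 0 := by exact_mod_cast h0
    have e : ∀ x : ℝ, (4 * ((x : ℂ) ^ (2 + 0) * phiK 0 ((l : ℂ) * 2 * (x : ℂ))) -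
      2 * ((x : ℂ) ^ (2 + 0) * phiK 0 ((l : ℂ) * 1 * (x : ℂ)))) =
        (((Real.exp (l * x) - 1) ^ 2 / l ^ 2 : ℝ) : ℂ) := by
      intro x
      have h1 := phiK_zero_identity ((l : ℂ) * 2 * (x : ℂ))
      have h2 := phiK_zero_identity ((l : ℂ) * 1 * (x : ℂ))
      have h3 : Complex.exp ((l : ℂ) * 2 * (x : ℂ)) = Complex.exp (l * x) ^ 2 := by
        rw [← Complex.exp_nat_mul]; congr 1; push_cast; ring
      rw [h3] at h1
      rw [mul_one] at h2 ⊢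
      push_cast
      rw [eq_div_iff (pow_ne_zero 2 hlc)]
      linear_combination h1 - 2 * h2
    refine ⟨fun x => (Real.exp (l * x) - 1) ^ 2 / l ^ 2, ?_, fun x => by positivity, fun x hx => ?_, ?_⟩
    · have := hi.re
      refine this.congr (Filter.Eventually.of_forall fun x => ?_)
      simp only [Pi.sub_apply]
      rw [e]
      exact Complex.ofReal_re _
    · have h1 : (Real.exp (l * x) - 1) ^ 2 = 0 := by
        rcases div_eq_zero_iff.1 hx with h | h
        · exact h
        · exact absurd h (pow_ne_zero 2 h0)
      have h2 : Real.exp (l * x) = 1 := by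
        have := pow_eq_zero_iff (two_ne_zero) |>.1 h1
        linarith
      have h3 : l * x = 0 := by simpa using h2
      exact (mul_eq_zero.1 h3).resolve_left h0
    · rw [hk]
      simp_rw [e]
      rw [integral_complex_ofReal]
      push_cast
      rfl

lemma kbar11_pos {K : Measure ℝ} {a1 b1 : ℝ} (hW : WI K a1 b1) (μ c R : ℝ) (hc : 0 ≤ c)
    (hσ : 0 < c + ∫ x : ℝ, x ^ 2 ∂K) (l : ℝ) (hl : l ∈ VV a1 b1 R) :
    ∃ k : ℝ, 0 < k ∧ kbar μ c K l 1 1 = (k : ℂ) := by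
  obtain ⟨h, hi, hpos, hz, he⟩ := kbar11_eq hW μ c R l hl
  refine ⟨_, ?_, he⟩
  have hn : 0 ≤ ∫ x, h x ∂K := integral_nonneg hpos
  rcases hc.lt_or_eq with hc' | hc'
  · linarith
  rcases hn.lt_or_eq with hn' | hn'
  · linarith
  exfalso
  have h0 := (integral_eq_zero_iff_of_nonneg (fun x => hpos x) hi).1 hn'.symm
  have : ∫ x : ℝ, x ^ 2 ∂K = 0 := by
    rw [integral_congr_ae (g := fun _ => (0:ℝ)), integral_zero]
    filter_upwards [h0] with x hx
    rw [hz x hx]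
    norm_num
  rw [this] at hσ
  linarith

/-- `Φ_z(x) = z² x² φ₀(λ z x)` -/
noncomputable def PhiZ (l : ℝ) (z : ℂ) (x : ℝ) : ℂ :=
  z ^ 2 * ((x : ℂ) ^ (2 + 0) * phiK 0 ((l : ℂ) * z * (x : ℂ)))

lemma PhiZ_identity (l : ℝ) (z : ℂ) (x : ℝ) :
    (l : ℂ) ^ 2 * PhiZ l z x = Complex.exp ((l : ℂ) * z * x) - 1 - (l : ℂ) * z * x := by
  rw [← phiK_zero_identity]
  unfold PhiZ
  ring

lemma PhiZ_re (l r y x : ℝ) :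
    l ^ 2 * (PhiZ l (zLine r y) x).re = Real.exp (l * r * x) * Real.cos (l * y * x) - 1 - l * r * x := by
  have h := congrArg Complex.re (PhiZ_identity l (zLine r y) x)
  have e : (l : ℂ) ^ 2 = ((l ^ 2 : ℝ) : ℂ) := by push_cast; rfl
  rw [e, Complex.re_ofReal_mul] at h
  rw [h]
  simp [Complex.exp_re, zLine]

lemma PhiZ_zero_re (r y x : ℝ) : (PhiZ 0 (zLine r y) x).re = x ^ 2 / 2 * (r ^ 2 - y ^ 2) := by
  have h : PhiZ 0 (zLine r y) x = ((x ^ 2 / 2 : ℝ) : ℂ) * zLine r y ^ 2 := by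
    unfold PhiZ
    have := phiK_at_zero 0
    simp only [Complex.ofReal_zero, zero_mul, this]
    push_cast
    ring
  rw [h, Complex.re_ofReal_mul]
  simp [zLine, sq]

lemma PhiZ_integrable {K : Measure ℝ} {a1 b1 : ℝ} (hW : WI K a1 b1) (l r y : ℝ)
    (h1 : a1 ≤ l * r) (h2 : l * r ≤ b1) : Integrable (fun x => (PhiZ l (zLine r y) x).re) K := by
  have := (GK_integrable hW 0 l (zLine r y) (by rwa [zLine_re]) (by rwa [zLine_re])).const_mul
    (zLine r y ^ 2)
  exact this.re

lemma kappa_re {K : Measure ℝ} {a1 b1 : ℝ} (hW : WI K a1 b1) (μ c l r y : ℝ)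
    (h1 : a1 ≤ l * r) (h2 : l * r ≤ b1) :
    (kappa μ c K l (zLine r y)).re =
      μ * r + c / 2 * (r ^ 2 - y ^ 2) + ∫ x, (PhiZ l (zLine r y) x).re ∂K := by
  have hi := (GK_integrable hW 0 l (zLine r y) (by rwa [zLine_re]) (by rwa [zLine_re])).const_mul
    (zLine r y ^ 2)
  have h := integral_re hi
  have h3 : ∫ x, (PhiZ l (zLine r y) x).re ∂K = (zLine r y ^ 2 * GK K 0 l (zLine r y)).re := by
    rw [GK, ← integral_const_mul]
    exact h
  rw [h3, kappa_eq, Complex.add_re]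
  congr 1
  have e : (c : ℂ) / 2 = ((c / 2 : ℝ) : ℂ) := by push_cast; rfl
  rw [Complex.add_re, e, Complex.re_ofReal_mul, Complex.re_ofReal_mul]
  simp [zLine, sq]

lemma exp_sub_le (u : ℝ) : |Real.exp u - 1 - u| ≤ u ^ 2 * (1 + Real.exp u) := by
  have h := phiK_zero_identity (u : ℂ)
  have h2 := congrArg (fun z => ‖z‖) h
  simp only [norm_mul, norm_pow, Complex.norm_real, Real.norm_eq_abs, sq_abs] at h2
  have e : Complex.exp (u:ℂ) - 1 - u = ((Real.exp u - 1 - u : ℝ) : ℂ) := by push_cast; rfl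
  rw [e, Complex.norm_real, Real.norm_eq_abs] at h2
  rw [← h2]
  have := norm_phiK_le 0 (u:ℂ)
  simp only [Complex.ofReal_re] at this
  gcongr

lemma eta_pointwise (a1 b1 l R y A x : ℝ) (h1 : a1 ≤ l * R) (h2 : l * R ≤ b1)
    (h3 : a1 ≤ l * (R + 1)) (h4 : l * (R + 1) ≤ b1) :
    (1 + A) * ((PhiZ l (zLine R y) x).re - (PhiZ l (zLine R 0) x).re)
      - A * ((PhiZ l (zLine (R + 1) y) x).re - (PhiZ l (zLine (R + 1) 0) x).re)
      ≤ (A ^ 2 + 4 * |A|) * (|x| ^ 2 * wE a1 b1 x) := by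
  have hw := (wE_pos a1 b1 x).le
  have hA := abs_nonneg A
  rcases eq_or_ne l 0 with h0 | h0
  · subst h0
    simp only [PhiZ_zero_re]
    have : 0 ≤ (A ^ 2 + 4 * |A|) * (|x| ^ 2 * wE a1 b1 x) := by positivity
    refine le_trans ?_ this
    nlinarith [mul_nonneg (sq_nonneg x) (sq_nonneg y)]
  · have hl2 : 0 < l ^ 2 := by positivity
    rw [← mul_le_mul_iff_of_pos_left hl2]
    have e1 := PhiZ_re l R y x
    have e2 := PhiZ_re l R 0 x
    have e3 := PhiZ_re l (R+1) y x
    have e4 := PhiZ_re l (R+1) 0 x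
    have hexp : Real.exp (l * (R + 1) * x) = Real.exp (l * R * x) * Real.exp (l * x) := by
      rw [← Real.exp_add]; congr 1; ring
    simp only [mul_zero, zero_mul, Real.cos_zero, mul_one] at e2 e4
    have hE1 := exp_le_wE a1 b1 _ x h1 h2
    have hE2 := exp_le_wE a1 b1 _ x h3 h4
    rw [hexp] at e3 e4 hE2
    set E := Real.exp (l * R * x) with hE
    set F := Real.exp (l * x) with hF
    set C := Real.cos (l * y * x) with hC
    have hEpos : 0 < E := Real.exp_pos _
    have hFpos : 0 < F := Real.exp_pos _
    have hl : l ^ 2 * ((1 + A) * ((PhiZ l (zLine R y) x).re - (PhiZ l (zLine R 0) x).re)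
      - A * ((PhiZ l (zLine (R + 1) y) x).re - (PhiZ l (zLine (R + 1) 0) x).re))
      = E * ((1 - C) * (A * (F - 1) - 1)) := by
      linear_combination (1 + A) * (e1 - e2) - A * (e3 - e4)
    rw [hl]
    have hC1 : C ≤ 1 := Real.cos_le_one _
    have hC2 : -1 ≤ C := Real.neg_one_le_cos _
    have hu := exp_sub_le (l * x)
    rw [← hF] at hu
    set q := A ^ 2 * (l * x) ^ 2 / 4 + |A| * ((l * x) ^ 2 * (1 + F)) with hq
    have hqn : 0 ≤ q := by positivity
    have hq1 : A * (F - 1) - 1 ≤ q := by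
      have h5 : A * (F - 1 - l * x) ≤ |A| * ((l * x) ^ 2 * (1 + F)) := by
        refine (le_abs_self _).trans ?_
        rw [abs_mul]
        gcongr
      have h6 : A * (l * x) - 1 ≤ A ^ 2 * (l * x) ^ 2 / 4 := by
        nlinarith [sq_nonneg (A * (l * x) - 2)]
      rw [hq]
      linarith
    calc E * ((1 - C) * (A * (F - 1) - 1)) ≤ E * ((1 - C) * q) := by
          have : 0 ≤ 1 - C := by linarith
          gcongr
      _ ≤ E * (2 * q) := by gcongr; linarith
      _ = (l ^ 2 * x ^ 2) * ((A ^ 2 / 2 + 2 * |A|) * E + 2 * |A| * (E * F)) := by rw [hq]; ring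
      _ ≤ (l ^ 2 * x ^ 2) * ((A ^ 2 / 2 + 2 * |A|) * wE a1 b1 x + 2 * |A| * wE a1 b1 x) := by gcongr
      _ ≤ (l ^ 2 * x ^ 2) * ((A ^ 2 + 4 * |A|) * wE a1 b1 x) := by
          have : 0 ≤ A ^ 2 * wE a1 b1 x := by positivity
          gcongr
          linarith
      _ = l ^ 2 * ((A ^ 2 + 4 * |A|) * (|x| ^ 2 * wE a1 b1 x)) := by rw [sq_abs]; ring

lemma eta_re_le {K : Measure ℝ} {a1 b1 : ℝ} (hW : WI K a1 b1) (μ c R l y A : ℝ) (hc : 0 ≤ c)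
    (h1 : a1 ≤ l * R) (h2 : l * R ≤ b1)
    (h3 : a1 ≤ l * (R + 1)) (h4 : l * (R + 1) ≤ b1) :
    (kappa μ c K l (zLine R y) - (A : ℂ) * kbar μ c K l (zLine R y) 1).re ≤
      (kappa μ c K l (zLine R 0) - (A : ℂ) * kbar μ c K l (zLine R 0) 1).re +
        (A ^ 2 + 4 * |A|) * ∫ x, |x| ^ 2 * wE a1 b1 x ∂K := by
  have i1 := PhiZ_integrable hW l R y h1 h2
  have i2 := PhiZ_integrable hW l R 0 h1 h2
  have i3 := PhiZ_integrable hW l (R+1) y h3 h4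
  have i4 := PhiZ_integrable hW l (R+1) 0 h3 h4
  have key := integral_mono (((i1.sub i2).const_mul (1 + A)).sub ((i3.sub i4).const_mul A))
    ((hW 2 le_rfl).const_mul (A ^ 2 + 4 * |A|))
    (fun x => eta_pointwise a1 b1 l R y A x h1 h2 h3 h4)
  rw [integral_const_mul] at key
  have e : ∫ x, (((fun x => (1 + A) * (((fun x => (PhiZ l (zLine R y) x).re) -
      fun x => (PhiZ l (zLine R 0) x).re) x)) -
      fun x => A * (((fun x => (PhiZ l (zLine (R+1) y) x).re) -
      fun x => (PhiZ l (zLine (R+1) 0) x).re) x)) x) ∂K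
      = (1 + A) * (∫ x, (PhiZ l (zLine R y) x).re ∂K - ∫ x, (PhiZ l (zLine R 0) x).re ∂K)
        - A * (∫ x, (PhiZ l (zLine (R+1) y) x).re ∂K - ∫ x, (PhiZ l (zLine (R+1) 0) x).re ∂K) := by
    rw [integral_sub' ((i1.sub i2).const_mul (1 + A)) ((i3.sub i4).const_mul A),
      integral_const_mul, integral_const_mul, integral_sub' i1 i2, integral_sub' i3 i4]
  rw [e] at key
  unfold kbar
  simp only [Complex.sub_re, Complex.re_ofReal_mul, zLine_add_one,
    kappa_re hW μ c l R y h1 h2, kappa_re hW μ c l R 0 h1 h2,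
    kappa_re hW μ c l (R+1) y h3 h4, kappa_re hW μ c l (R+1) 0 h3 h4]
  nlinarith [mul_nonneg hc (sq_nonneg y)]

/-- The integrand of the hedge ratio as a jet; the two derivative functions are explicit. -/
lemma exists_good_set {K : Measure ℝ} {a1 b1 : ℝ} (hW : WI K a1 b1) (μ c R : ℝ) (hc : 0 ≤ c)
    (ha1 : a1 < 0) (hb1 : 2 < b1) (hR1 : a1 < R) (hR2 : R < b1) (hR3 : a1 < R + 1) (hR4 : R + 1 < b1)
    (hσ : 0 < c + ∫ x : ℝ, x ^ 2 ∂K) :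
    ∃ U : Set ℝ, IsOpen U ∧ Set.Icc 0 1 ⊆ U ∧ U ⊆ VV a1 b1 R ∧ ∃ ε > 0, ∀ l ∈ U, ε ≤ ‖kbar μ c K l 1 1‖ := by
  have hV : Set.Icc 0 1 ⊆ VV a1 b1 R := fun l hl =>
    ⟨⟨⟨Icc_subset_Vr a1 b1 R ha1 (by linarith) hR1 hR2 hl,
      Icc_subset_Vr a1 b1 (R+1) ha1 (by linarith) hR3 hR4 hl⟩,
      Icc_subset_Vr a1 b1 1 ha1 (by linarith) (by linarith) (by linarith) hl⟩,
      Icc_subset_Vr a1 b1 2 ha1 (by linarith) (by linarith) (by linarith) hl⟩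
  have hcont : ContinuousOn (fun l => ‖kbar μ c K l 1 1‖) (VV a1 b1 R) :=
    ((kbar1_jet hW μ c R).c0 0).norm
  obtain ⟨l0, hl0, hmin⟩ := isCompact_Icc.exists_isMinOn (Set.nonempty_Icc.2 zero_le_one) (hcont.mono hV)
  obtain ⟨k, hk, hke⟩ := kbar11_pos hW μ c R hc hσ l0 (hV hl0)
  have hpos : 0 < ‖kbar μ c K l0 1 1‖ := by
    rw [hke, norm_pos_iff]
    exact_mod_cast hk.ne'
  refine ⟨VV a1 b1 R ∩ (fun l => ‖kbar μ c K l 1 1‖) ⁻¹' (Set.Ioi (‖kbar μ c K l0 1 1‖ / 2)),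
    hcont.isOpen_inter_preimage (isOpen_VV _ _ _) isOpen_Ioi, ?_, Set.inter_subset_left,
    ‖kbar μ c K l0 1 1‖ / 2, by positivity, fun l hl => le_of_lt hl.2⟩
  intro l hl
  refine ⟨hV hl, ?_⟩
  have : ‖kbar μ c K l0 1 1‖ ≤ ‖kbar μ c K l 1 1‖ := hmin hl
  simp only [Set.mem_preimage, Set.mem_Ioi]
  linarith

lemma eta_re_bdd {K : Measure ℝ} {a1 b1 : ℝ} (hW : WI K a1 b1) (μ c R : ℝ) (hc : 0 ≤ c)
    (U : Set ℝ) (hUV : U ⊆ VV a1 b1 R) (ε : ℝ) (hε : 0 < ε)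
    (hσ : 0 < c + ∫ x : ℝ, x ^ 2 ∂K)
    (hlow : ∀ l ∈ U, ε ≤ ‖kbar μ c K l 1 1‖)
    (hη : PB U (fun l y => etaLK μ c K l (zLine R y))) :
    ∃ C, ∀ l ∈ U, ∀ y, (etaLK μ c K l (zLine R y)).re ≤ C := by
  obtain ⟨_, C1, N1, hC1, hb1⟩ := hη
  obtain ⟨_, C2, N2, hC2, hb2⟩ := (kappa_jet hW μ c 1).b0
  set I := ∫ x, |x| ^ 2 * wE a1 b1 x ∂K with hI
  have hIn : 0 ≤ I := integral_nonneg fun x => by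
    have := (wE_pos a1 b1 x).le
    simp only [Pi.zero_apply]
    positivity
  refine ⟨C1 + ((C2 / ε) ^ 2 + 4 * (C2 / ε)) * I, fun l hl y => ?_⟩
  have hv := hUV hl
  obtain ⟨k1, hk1⟩ := kappa_real μ c K l 1
  obtain ⟨k, hkp, hk⟩ := kbar11_pos hW μ c R hc hσ l hv
  have hform : ∀ y, etaLK μ c K l (zLine R y) =
      kappa μ c K l (zLine R y) - ((k1 / k : ℝ) : ℂ) * kbar μ c K l (zLine R y) 1 := by
    intro y
    unfold etaLK gamLK
    rw [hk]
    rw [Complex.ofReal_one] at hk1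
    rw [hk1]
    push_cast
    ring
  have hA : |k1 / k| ≤ C2 / ε := by
    rw [abs_div]
    have e1 : |k1| ≤ C2 := by
      have := hb2 l hv.1.2 0
      beta_reduce at this
      rw [zLine_zero, hk1, Complex.norm_real, Real.norm_eq_abs] at this
      simpa using this
    have e2 : ε ≤ |k| := by
      have := hlow l hl
      rwa [hk, Complex.norm_real, Real.norm_eq_abs] at this
    gcongr
  have h := eta_re_le hW μ c R l y (k1 / k) hc hv.1.1.1.1.le hv.1.1.1.2.le hv.1.1.2.1.le hv.1.1.2.2.le
  rw [← hform, ← hform] at h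
  have h0 : (etaLK μ c K l (zLine R 0)).re ≤ C1 := by
    have := (Complex.re_le_norm _).trans (hb1 l hl 0)
    simpa using this
  have h2 : ((k1 / k) ^ 2 + 4 * |k1 / k|) * I ≤ ((C2 / ε) ^ 2 + 4 * (C2 / ε)) * I := by
    rw [← sq_abs (k1 / k)]
    gcongr
  linarith

lemma cpowR_PB {U : Set ℝ} (s R : ℝ) (w : ℂ) : PB U (fun _ y => cpowR s (zLine R y - w)) := by
  refine ⟨fun _ _ => by unfold cpowR zLine; fun_prop, Real.exp ((R - w.re) * Real.log s), 0, by positivity,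
    fun l _ y => ?_⟩
  unfold cpowR
  rw [Complex.norm_exp, pow_zero, mul_one]
  simp [zLine]

lemma cpowR_sub_one (s : ℝ) (hs : 0 < s) (z : ℂ) : cpowR s (z - 1) = cpowR s z * (1 / (s:ℂ)) := by
  unfold cpowR
  have : (z - 1) * (Real.log s : ℂ) = z * Real.log s - Real.log s := by ring
  rw [this, Complex.exp_sub, ← Complex.ofReal_exp, Real.exp_log hs]
  ring

/-- integrand of the cash greeks -/
noncomputable def cashI (σ2 T R : ℝ) (l : ℝ → ℝ) (n : ℕ) (t s y : ℝ) : ℂ :=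
  (∏ k ∈ Finset.range n, (zLine R y - (k : ℂ))) * cpowR s (zLine R y) *
    Complex.exp (((σ2 : ℂ) / 2) * zLine R y * (zLine R y - 1) * ((T : ℂ) - (t : ℂ))) * pCoef l y

lemma cashI_integrable (σ2 T R : ℝ) (l : ℝ → ℝ) (n : ℕ) (t s : ℝ) (hσ : 0 < σ2) (ht : t < T)
    (hp : RapidDecay (pCoef l)) : Integrable (cashI σ2 T R l n t s) := by
  have h1 : ∀ n : ℕ, PB Set.univ (fun _ y => ∏ k ∈ Finset.range n, (zLine R y - (k : ℂ))) := by
    intro n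
    induction n with
    | zero => simpa using PB.const (U := Set.univ) 1
    | succ n ih =>
      refine (ih.mul ((PB.zLine R).add (PB.const (-(n:ℂ))))).congr fun l y => ?_
      rw [Finset.prod_range_succ]
      ring
  have h2 : PB Set.univ (fun _ y => cpowR s (zLine R y)) :=
    (cpowR_PB s R 0).congr fun l y => by rw [sub_zero]
  have h3 : PB Set.univ (fun _ y =>
      Complex.exp (((σ2 : ℂ) / 2) * zLine R y * (zLine R y - 1) * ((T : ℂ) - (t : ℂ)))) := by
    refine ⟨fun _ _ => by unfold zLine; fun_prop, Real.exp (σ2 / 2 * (R ^ 2 - R) * (T - t)), 0, by positivity,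
      fun l _ y => ?_⟩
    rw [Complex.norm_exp, pow_zero, mul_one]
    apply Real.exp_le_exp.2
    have e : ((σ2 : ℂ) / 2) * zLine R y * (zLine R y - 1) * ((T : ℂ) - (t : ℂ))
        = ((σ2 / 2 * (T - t) : ℝ) : ℂ) * (zLine R y * (zLine R y - 1)) := by
      push_cast; ring
    rw [e, Complex.re_ofReal_mul]
    have e2 : (zLine R y * (zLine R y - 1)).re = R ^ 2 - R - y ^ 2 := by
      simp [zLine]; ring
    rw [e2]
    have : 0 ≤ σ2 / 2 * (T - t) * y ^ 2 := by
      have : 0 ≤ T - t := by linarith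
      positivity
    nlinarith
  exact (((h1 n).mul h2).mul h3).integrable hp 0 (Set.mem_univ _)

lemma cash_lin (σ2 T R : ℝ) (l : ℝ → ℝ) (t s : ℝ) (hσ : 0 < σ2) (ht : t < T)
    (hp : RapidDecay (pCoef l)) (F : ℝ → ℂ) (c2 c3 c4 c5 c6 c7 : ℂ)
    (hF : ∀ y, F y = c2 * cashI σ2 T R l 2 t s y + c3 * cashI σ2 T R l 3 t s y +
      c4 * cashI σ2 T R l 4 t s y + c5 * cashI σ2 T R l 5 t s y + c6 * cashI σ2 T R l 6 t s y +
      c7 * cashI σ2 T R l 7 t s y) :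
    ∫ y, F y = c2 * cashGreek σ2 T R l 2 t s + c3 * cashGreek σ2 T R l 3 t s +
      c4 * cashGreek σ2 T R l 4 t s + c5 * cashGreek σ2 T R l 5 t s + c6 * cashGreek σ2 T R l 6 t s +
      c7 * cashGreek σ2 T R l 7 t s := by
  have e : ∀ n, cashGreek σ2 T R l n t s = ∫ y, cashI σ2 T R l n t s y := fun n => rfl
  have hi : ∀ (a : ℂ) n, Integrable (fun y => a * cashI σ2 T R l n t s y) := fun a n =>
    (cashI_integrable σ2 T R l n t s hσ ht hp).const_mul a
  simp_rw [hF, e]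
  have i3 : Integrable (fun y => c2 * cashI σ2 T R l 2 t s y + c3 * cashI σ2 T R l 3 t s y) :=
    (hi c2 2).add (hi c3 3)
  have i4 : Integrable (fun y => c2 * cashI σ2 T R l 2 t s y + c3 * cashI σ2 T R l 3 t s y + c4 * cashI σ2 T R l 4 t s y) :=
    i3.add (hi c4 4)
  have i5 : Integrable (fun y => c2 * cashI σ2 T R l 2 t s y + c3 * cashI σ2 T R l 3 t s y + c4 * cashI σ2 T R l 4 t s y + c5 * cashI σ2 T R l 5 t s y) :=
    i4.add (hi c5 5)
  have i6 : Integrable (fun y => c2 * cashI σ2 T R l 2 t s y + c3 * cashI σ2 T R l 3 t s y + c4 * cashI σ2 T R l 4 t s y + c5 * cashI σ2 T R l 5 t s y + c6 * cashI σ2 T R l 6 t s y) :=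
    i5.add (hi c6 6)
  rw [integral_add i6 (hi c7 7), integral_add i5 (hi c6 6), integral_add i4 (hi c5 5),
    integral_add i3 (hi c4 4), integral_add (hi c2 2) (hi c3 3)]
  simp only [integral_const_mul]

/-- second-order expansion of the pure hedge ratio `ξ(t,s)`
(Theorem `ApproxRatioPureHedge`). -/
theorem pure_hedge_ratio_expansion
    (μ c : ℝ) (hc : 0 ≤ c) (K : MeasureTheory.Measure ℝ)
    (hK0 : K {0} = 0)
    (hKmin : ∫⁻ x : ℝ, ENNReal.ofReal (min 1 (x ^ 2)) ∂K ≠ ⊤)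
    (R : ℝ) (hR : R ≠ 0) (a b : ℝ)
    (h0 : (0 : ℝ) ∈ Set.Ioo a b) (h2 : (2 : ℝ) ∈ Set.Ioo a b)
    (h2R : 2 * R ∈ Set.Ioo a b)
    (hK5 : ∫⁻ x in {x : ℝ | 1 ≤ |x|}, ENNReal.ofReal (|x| ^ 5) ∂K ≠ ⊤)
    (hKexp : ∀ s ∈ Set.Ioo a b,
      ∫⁻ x in {x : ℝ | 1 ≤ |x|}, ENNReal.ofReal (Real.exp (s * x)) ∂K ≠ ⊤)
    (σ2 : ℝ) (hσ2 : σ2 = c + ∫ x : ℝ, x ^ 2 ∂K) (hσ2pos : 0 < σ2)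
    (σ m s3 s4 : ℝ) (hσ : σ = Real.sqrt σ2) (hm : m = (μ + σ2 / 2) / σ2)
    (hs3 : s3 = (∫ x : ℝ, x ^ 3 ∂K) / σ ^ 3) (hs4 : s4 = (∫ x : ℝ, x ^ 4 ∂K) / σ ^ 4)
    (f : ℝ → ℝ) (hf : ContDiffOn ℝ (⊤ : ℕ∞) f (Set.Ioi 0))
    (l : ℝ → ℝ) (hl : l = fun x => f (Real.exp x) * Real.exp (-R * x))
    (hlint : ∀ n : ℕ, Integrable (iteratedDeriv n l))
    (T t s : ℝ) (hT : 0 < T) (ht : t ∈ Set.Ico 0 T) (hs : 0 < s)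
    (ξ : ℝ → ℂ)
    (hξ : ∀ lam : ℝ, ξ lam =
      ∫ y : ℝ, cpowR s (zLine R y - 1) * gamLK μ c K lam (zLine R y) *
        Complex.exp (etaLK μ c K lam (zLine R y) * ((T : ℂ) - (t : ℂ))) * pCoef l y)
    (D : ℕ → ℂ) (hD : ∀ k : ℕ, D k = cashGreek σ2 T R l k t s) :
    ContDiffOn ℝ 2 ξ (Set.Icc 0 1) ∧
    ξ 0 = D 1 / (s : ℂ) ∧
    iteratedDerivWithin 1 ξ (Set.Icc 0 1) 0 =
      (s3 : ℂ) * (σ : ℂ) * (1 / (s : ℂ)) *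
        ((1 / 2 : ℂ) * D 2 +
          (σ : ℂ) ^ 2 * ((T : ℂ) - (t : ℂ)) *
            ((1 - (m : ℂ)) * D 2 + (1 - (m : ℂ) / 2) * D 3 + (1 / 6 : ℂ) * D 4)) ∧
    iteratedDerivWithin 2 ξ (Set.Icc 0 1) 0 =
      (s3 : ℂ) ^ 2 * (σ : ℂ) ^ 2 * (1 / (s : ℂ)) *
        ((-1 : ℂ) * D 2 +
          (σ : ℂ) ^ 2 * ((T : ℂ) - (t : ℂ)) *
            ((2 / 3 + (m : ℂ)) * D 2 + (17 / 6 - (m : ℂ)) * D 3 +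
              (3 / 2 - (m : ℂ) / 2) * D 4 + (1 / 6 : ℂ) * D 5)) +
      (s3 : ℂ) ^ 2 * (σ : ℂ) ^ 6 * ((T : ℂ) - (t : ℂ)) ^ 2 * (1 / (s : ℂ)) *
        ((1 - 2 * (m : ℂ) + (m : ℂ) ^ 2) * D 2 +
          (7 - 10 * (m : ℂ) + 7 / 2 * (m : ℂ) ^ 2) * D 3 +
          (55 / 6 - 9 * (m : ℂ) + 2 * (m : ℂ) ^ 2) * D 4 +
          (23 / 6 - 7 / 3 * (m : ℂ) + (m : ℂ) ^ 2 / 4) * D 5 +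
          (7 / 12 - (m : ℂ) / 6) * D 6 + (1 / 36 : ℂ) * D 7) +
      (s4 : ℂ) * (σ : ℂ) ^ 2 * (1 / (s : ℂ)) *
        (((3 / 2 : ℂ) * D 2 + (1 / 3 : ℂ) * D 3) +
          (σ : ℂ) ^ 2 * ((T : ℂ) - (t : ℂ)) *
            ((7 / 6 - 3 * (m : ℂ)) * D 2 + (25 / 12 - 5 / 2 * (m : ℂ)) * D 3 +
              (5 / 6 - (m : ℂ) / 3) * D 4 + (1 / 12 : ℂ) * D 5)) := by
  have hat : t < T := ht.2
  -- choice of the exponents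
  have hRa : a < R := by linarith [h0.1, h2R.1]
  have hRb : R < b := by linarith [h0.2, h2R.2]
  have hRa' : a < R + 1 := by linarith [h2.1, h2R.1]
  have hRb' : R + 1 < b := by linarith [h2.2, h2R.2]
  obtain ⟨a1, haa1, ha1⟩ := exists_between (lt_min h0.1 (lt_min hRa hRa'))
  obtain ⟨b1, hb1, hbb1⟩ := exists_between (max_lt h2.2 (max_lt hRb hRb'))
  simp only [lt_min_iff] at ha1
  simp only [max_lt_iff] at hb1
  have hW : WI K a1 b1 := fun n hn =>
    weight_integrable K hKmin a b a1 b1 haa1 ha1.1 (by linarith) hbb1 hKexp n hn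
  have hσ' : 0 < c + ∫ x : ℝ, x ^ 2 ∂K := hσ2 ▸ hσ2pos
  obtain ⟨U, hUo, hUI, hUV, ε, hε, hlow⟩ := exists_good_set hW μ c R hc ha1.1 hb1.1 ha1.2.1 hb1.2.1
    ha1.2.2 hb1.2.2 hσ'
  -- the payoff transform
  have hlc : ContDiff ℝ (⊤ : ℕ∞) l := by
    rw [hl]
    have h1 : ContDiff ℝ (⊤ : ℕ∞) (fun x : ℝ => f (Real.exp x)) :=
      hf.comp_contDiff Real.contDiff_exp (fun x => Real.exp_pos x)
    exact h1.mul (Real.contDiff_exp.comp (contDiff_const.mul contDiff_id))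
  have hp := rapidDecay_pCoef l hlc hlint
  -- jets
  have jN := (kbarz_jet hW μ c R).mono hUV
  have jD := ((kbar1_jet hW μ c R).mono hUV).inv ε hε (fun l hl _ => hlow l hl)
  have jk := (kappa_jet hW μ c R).mono (V := U) (fun l hl => (hUV hl).1.1.1)
  have jk1 := ((kappa_jet hW μ c 1).mono (V := U) (fun l hl => (hUV hl).1.2)).freeze
  have jg := jN.mul jD
  have je := jk.sub (jk1.mul jg)
  have heta : ∀ l y, kappa μ c K l (zLine R y) - kappa μ c K l (zLine 1 0) *
      (kbar μ c K l (zLine R y) 1 * (kbar μ c K l 1 1)⁻¹) = etaLK μ c K l (zLine R y) := by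
    intro l y
    unfold etaLK gamLK
    rw [zLine_zero, Complex.ofReal_one, div_eq_mul_inv]
  obtain ⟨Cη, hCη⟩ := eta_re_bdd hW μ c R hc U hUV ε hε hσ' hlow (je.b0.congr heta)
  have jeT := je.mul (Jet.of_const (U := U) (PB.const ((T:ℂ) - t)))
  have hTt : 0 ≤ T - t := by linarith
  have jE := jeT.exp (max Cη 0 * (T - t)) (by
    intro l hl y
    have e : (T:ℂ) - t = ((T - t : ℝ) : ℂ) := by push_cast; rfl
    rw [heta, e, Complex.re_mul_ofReal]
    have := hCη l hl y
    gcongr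
    exact this.trans (le_max_left _ _))
  have jH := ((Jet.of_const (cpowR_PB (U := U) s R 1)).mul jg).mul jE
  have hmain := Jet.integral hUo hUI jH hp ξ (by
    intro l
    rw [hξ]
    refine integral_congr_ae (Filter.Eventually.of_forall fun y => ?_)
    simp only
    rw [heta, gamLK, div_eq_mul_inv])
  obtain ⟨hC2, hD1, hD2⟩ := hmain
  -- values at zero
  have hσpos : 0 < σ := by rw [hσ]; exact Real.sqrt_pos.2 hσ2pos
  have hσsq : σ2 = σ ^ 2 := by rw [hσ, Real.sq_sqrt hσ2pos.le]
  have hσc : (σ : ℂ) ≠ 0 := by exact_mod_cast hσpos.ne'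
  have hM2 : (((c + ∫ x : ℝ, x ^ 2 ∂K) : ℝ) : ℂ) = (σ:ℂ) ^ 2 := by
    rw [← hσ2, hσsq]; push_cast; rfl
  have hM3 : ((∫ x : ℝ, x ^ 3 ∂K : ℝ) : ℂ) = s3 * (σ:ℂ) ^ 3 := by
    rw [hs3]; push_cast; field_simp
  have hM4 : ((∫ x : ℝ, x ^ 4 ∂K : ℝ) : ℂ) = s4 * (σ:ℂ) ^ 4 := by
    rw [hs4]; push_cast; field_simp
  have hμ : (μ : ℂ) = m * (σ:ℂ) ^ 2 - (σ:ℂ) ^ 2 / 2 := by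
    have : μ = m * σ ^ 2 - σ ^ 2 / 2 := by
      rw [hm, hσsq]; field_simp; ring
    rw [this]; push_cast; rfl
  have hk0 : ∀ z, kappa μ c K 0 z = (m * (σ:ℂ) ^ 2 - (σ:ℂ) ^ 2 / 2) * z + (σ:ℂ) ^ 2 / 2 * z ^ 2 := by
    intro z
    unfold kappa
    rw [if_pos rfl, hM2, hμ]
  have hk1 : ∀ z, kap1 K 0 z = z ^ 3 * (s3 * (σ:ℂ) ^ 3 / 6) := by
    intro z
    unfold kap1
    rw [GK_at_zero, hM3]
    push_cast
    norm_num
  have hk2 : ∀ z, kap2 K 0 z = z ^ 4 * (s4 * (σ:ℂ) ^ 4 / 12) := by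
    intro z
    unfold kap2
    rw [GK_at_zero, hM4]
    push_cast
    norm_num
  have hkz : ∀ z, kbar μ c K 0 z 1 = (σ:ℂ) ^ 2 * z := by
    intro z
    unfold kbar
    simp only [hk0]
    ring
  have hex : ∀ z : ℂ, ((m * (σ:ℂ) ^ 2 - (σ:ℂ) ^ 2 / 2) * z + (σ:ℂ) ^ 2 / 2 * z ^ 2 -
      ((m * (σ:ℂ) ^ 2 - (σ:ℂ) ^ 2 / 2) * 1 + (σ:ℂ) ^ 2 / 2 * 1 ^ 2) *
        ((σ:ℂ) ^ 2 * z * ((σ:ℂ) ^ 2 * 1)⁻¹)) * ((T:ℂ) - t) =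
      ((σ2 : ℂ) / 2) * z * (z - 1) * ((T : ℂ) - (t : ℂ)) := by
    intro z
    rw [hσsq]
    push_cast
    field_simp
    ring
  have hsc : (s : ℂ) ≠ 0 := by exact_mod_cast hs.ne'
  refine ⟨hC2, ?_, ?_, ?_⟩
  · rw [hξ, hD, cashGreek, ← integral_div]
    refine integral_congr_ae (Filter.Eventually.of_forall fun y => ?_)
    simp only
    rw [← heta, gamLK]
    simp only [hkz, hk0, zLine_zero, Complex.ofReal_one, hex, cpowR_sub_one s hs]
    generalize Complex.exp (((σ2 : ℂ) / 2) * zLine R y * (zLine R y - 1) * ((T : ℂ) - (t : ℂ))) = X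
    simp
    field_simp
  · rw [hD1, cash_lin σ2 T R l t s hσ2pos hat hp _
      ((s3 : ℂ) * (σ : ℂ) * (1 / (s : ℂ)) * (1 / 2 + (σ : ℂ) ^ 2 * ((T : ℂ) - (t : ℂ)) * (1 - (m : ℂ))))
      ((s3 : ℂ) * (σ : ℂ) * (1 / (s : ℂ)) * ((σ : ℂ) ^ 2 * ((T : ℂ) - (t : ℂ)) * (1 - (m : ℂ) / 2)))
      ((s3 : ℂ) * (σ : ℂ) * (1 / (s : ℂ)) * ((σ : ℂ) ^ 2 * ((T : ℂ) - (t : ℂ)) * (1 / 6 : ℂ)))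
      0 0 0 ?_]
    · simp only [hD]
      ring
    · intro y
      unfold cashI
      simp only [hkz, hk0, hk1, hk2, zLine_zero, Complex.ofReal_one, hex, cpowR_sub_one s hs]
      generalize Complex.exp (((σ2 : ℂ) / 2) * zLine R y * (zLine R y - 1) * ((T : ℂ) - (t : ℂ))) = X
      generalize cpowR s (zLine R y) = Y
      generalize pCoef l y = P
      generalize zLine R y = z
      simp only [Finset.prod_range_succ, Finset.prod_range_zero]
      push_cast
      field_simp
      ring
  · rw [hD2, cash_lin σ2 T R l t s hσ2pos hat hp _
      ((s3 : ℂ) ^ 2 * (σ : ℂ) ^ 2 * (1 / (s : ℂ)) *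
        (-1 + (σ : ℂ) ^ 2 * ((T : ℂ) - (t : ℂ)) * (2 / 3 + (m : ℂ))) +
        (s3 : ℂ) ^ 2 * (σ : ℂ) ^ 6 * ((T : ℂ) - (t : ℂ)) ^ 2 * (1 / (s : ℂ)) *
          (1 - 2 * (m : ℂ) + (m : ℂ) ^ 2) +
        (s4 : ℂ) * (σ : ℂ) ^ 2 * (1 / (s : ℂ)) * (3 / 2 + (σ : ℂ) ^ 2 * ((T : ℂ) - (t : ℂ)) * (7 / 6 - 3 * (m : ℂ))))
      ((s3 : ℂ) ^ 2 * (σ : ℂ) ^ 2 * (1 / (s : ℂ)) *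
        ((σ : ℂ) ^ 2 * ((T : ℂ) - (t : ℂ)) * (17 / 6 - (m : ℂ))) +
        (s3 : ℂ) ^ 2 * (σ : ℂ) ^ 6 * ((T : ℂ) - (t : ℂ)) ^ 2 * (1 / (s : ℂ)) *
          (7 - 10 * (m : ℂ) + 7 / 2 * (m : ℂ) ^ 2) +
        (s4 : ℂ) * (σ : ℂ) ^ 2 * (1 / (s : ℂ)) * (1 / 3 + (σ : ℂ) ^ 2 * ((T : ℂ) - (t : ℂ)) * (25 / 12 - 5 / 2 * (m : ℂ))))
      ((s3 : ℂ) ^ 2 * (σ : ℂ) ^ 2 * (1 / (s : ℂ)) *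
        ((σ : ℂ) ^ 2 * ((T : ℂ) - (t : ℂ)) * (3 / 2 - (m : ℂ) / 2)) +
        (s3 : ℂ) ^ 2 * (σ : ℂ) ^ 6 * ((T : ℂ) - (t : ℂ)) ^ 2 * (1 / (s : ℂ)) *
          (55 / 6 - 9 * (m : ℂ) + 2 * (m : ℂ) ^ 2) +
        (s4 : ℂ) * (σ : ℂ) ^ 2 * (1 / (s : ℂ)) * ((σ : ℂ) ^ 2 * ((T : ℂ) - (t : ℂ)) * (5 / 6 - (m : ℂ) / 3)))
      ((s3 : ℂ) ^ 2 * (σ : ℂ) ^ 2 * (1 / (s : ℂ)) *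
        ((σ : ℂ) ^ 2 * ((T : ℂ) - (t : ℂ)) * (1 / 6)) +
        (s3 : ℂ) ^ 2 * (σ : ℂ) ^ 6 * ((T : ℂ) - (t : ℂ)) ^ 2 * (1 / (s : ℂ)) *
          (23 / 6 - 7 / 3 * (m : ℂ) + (m : ℂ) ^ 2 / 4) +
        (s4 : ℂ) * (σ : ℂ) ^ 2 * (1 / (s : ℂ)) * ((σ : ℂ) ^ 2 * ((T : ℂ) - (t : ℂ)) * (1 / 12)))
      ((s3 : ℂ) ^ 2 * (σ : ℂ) ^ 6 * ((T : ℂ) - (t : ℂ)) ^ 2 * (1 / (s : ℂ)) * (7 / 12 - (m : ℂ) / 6))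
      ((s3 : ℂ) ^ 2 * (σ : ℂ) ^ 6 * ((T : ℂ) - (t : ℂ)) ^ 2 * (1 / (s : ℂ)) * (1 / 36)) ?_]
    · simp only [hD]
      ring
    · intro y
      unfold cashI
      simp only [hkz, hk0, hk1, hk2, zLine_zero, Complex.ofReal_one, hex, cpowR_sub_one s hs]
      generalize Complex.exp (((σ2 : ℂ) / 2) * zLine R y * (zLine R y - 1) * ((T : ℂ) - (t : ℂ))) = X
      generalize cpowR s (zLine R y) = Y
      generalize pCoef l y = P
      generalize zLine R y = z
      generalize (T : ℂ) - (t : ℂ) = τ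
      simp only [Finset.prod_range_succ, Finset.prod_range_zero]
      push_cast
      field_simp
      ring
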